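/- Let n ≥ 1 and s ∈ (0,1), with s ≤ 1/2 if n = 1, and let M ≥ 2. Let u : ℝⁿ → 𝕊^{M−1} ⊂ ℝ^M be measurable with [u]_{W^{s,n/s}(ℝⁿ)} < ∞, let Ω ⊆ ℝⁿ be open, and assume u is a minimizing W^{s,n/s}-harmonic map in Ω without homotopy constraint, i.e. ∫_{ℝⁿ}∫_{ℝⁿ} |u(x)−u(y)|^{n/s}/|x−y|^{2n} dx dy ≤ ∫_{ℝⁿ}∫_{ℝⁿ} |v(x)−v(y)|^{n/s}/|x−y|^{2n} dx dy for every measurable v : ℝⁿ → 𝕊^{M−1} with v = u almost everywhere on ℝⁿ∖Ω. Then u has a representative which is locally Hölder continuous in Ω: there exist α ∈ (0,1) and a map ũ : ℝⁿ → 𝕊^{M−1} with ũ = u almost everywhere such that ũ is α-Hölder continuous on every compact subset of Ω. -/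

import Mathlib

open MeasureTheory
open scoped ENNReal

noncomputable section

/-- Euclidean space `ℝᵏ`. -/
abbrev Euc (k : ℕ) : Type _ := EuclideanSpace ℝ (Fin k)

/-- The Gagliardo seminorm `[f]_{W^{σ,p}(A)}` as a value in `[0,∞]`. -/
def gagliardo (n M : ℕ) (σ p : ℝ) (A : Set (Euc n)) (f : Euc n → Euc M) : ℝ≥0∞ :=
  (∫⁻ x in A, ∫⁻ y in A,
      ENNReal.ofReal (‖f x - f y‖ ^ p / ‖x - y‖ ^ ((n : ℝ) + σ * p))) ^ (1 / p)

/-- The (unrooted) `E_{s,n/s}` energy `∫∫_{ℝⁿ×ℝⁿ} |f(x)-f(y)|^{n/s}/|x-y|^{2n} dx dy`. -/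
def energy (n M : ℕ) (s : ℝ) (f : Euc n → Euc M) : ℝ≥0∞ :=
  ∫⁻ x, ∫⁻ y, ENNReal.ofReal (‖f x - f y‖ ^ ((n : ℝ) / s) / ‖x - y‖ ^ (2 * (n : ℝ)))

/-
Only the pairs of points meeting a ball `B` see a change of `u` inside `B`. After rescaling to the
unit ball, a competitor is obtained by averaging `u` around `x` at a scale proportional to the
distance from `x` to the complement of the ball, by interpolating linearly to a constant near the
centre, and by normalizing. Before normalization it is an average of functions `u ∘ T` with
`T` bi-Lipschitz, cut off near the centre; by Jensen's inequality its energy is at most a constant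
`C` times the energy of `u` on the collar, that is, on the pairs that meet the unit ball but not the
ball of radius `1/4`. The error due to the cutoff is integrable since `p = n/s > n`, and if the
energy on the collar is small the average stays close to the sphere, so that normalizing costs only
a constant factor.

Minimality then bounds the energy of `u` on the pairs meeting the ball of radius `1` by `C` times
the difference between this energy and the one for the ball of radius `1/4` (hole filling), whence
the energy of small balls decays geometrically once it is small. It is small at some scale,
uniformly in the centre, by absolute continuity of the integral. By Campanato's argument the
averages of `u` over shrinking balls converge at a geometric rate, and their limit is Hölder
continuous.
-/

open Set Metric Filter ProbabilityTheory
open Module (finrank)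
open scoped NNReal Topology

lemma enorm_integral_rpow_le_lintegral {α F : Type*} [MeasurableSpace α] [NormedAddCommGroup F]
    [NormedSpace ℝ F] {ν : Measure α} [IsProbabilityMeasure ν] {p : ℝ} (hp : 1 ≤ p) {f : α → F}
    (hf : AEStronglyMeasurable f ν) :
    ‖∫ z, f z ∂ν‖ₑ ^ p ≤ ∫⁻ z, ‖f z‖ₑ ^ p ∂ν := by
  have hp₀ : 0 < p := by linarith
  have h_one : ‖∫ z, f z ∂ν‖ₑ ≤ eLpNorm f 1 ν := by
    rw [eLpNorm_one_eq_lintegral_enorm]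
    exact enorm_integral_le_lintegral_enorm _
  have h_le : eLpNorm f 1 ν ≤ (∫⁻ z, ‖f z‖ₑ ^ p ∂ν) ^ (1 / p) := by
    have h := eLpNorm_le_eLpNorm_of_exponent_le (p := 1) (q := ENNReal.ofReal p)
      (ENNReal.one_le_ofReal.2 hp) hf
    rwa [eLpNorm_eq_lintegral_rpow_enorm_toReal (p := .ofReal p) (by simpa using hp₀) (by simp),
      ENNReal.toReal_ofReal hp₀.le] at h
  calc ‖∫ z, f z ∂ν‖ₑ ^ p ≤ ((∫⁻ z, ‖f z‖ₑ ^ p ∂ν) ^ (1 / p)) ^ p := by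
        gcongr
        exact h_one.trans h_le
    _ = ∫⁻ z, ‖f z‖ₑ ^ p ∂ν := by
        rw [← ENNReal.rpow_mul, one_div_mul_cancel hp₀.ne', ENNReal.rpow_one]

section ChangeOfVariables

variable {E : Type*} [NormedAddCommGroup E] [NormedSpace ℝ E] [FiniteDimensional ℝ E]
  [MeasurableSpace E] [BorelSpace E] (μ : Measure E) [μ.IsAddHaarMeasure]

lemma addHaar_preimage_le_of_antilipschitzWith {K : ℝ≥0} {T : E → E} (hT : AntilipschitzWith K T)
    (s : Set E) : μ (T ⁻¹' s) ≤ (K : ℝ≥0∞) ^ finrank ℝ E * μ s := by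
  obtain ⟨c, hc⟩ : ∃ c : ℝ≥0, μ = c • Measure.hausdorffMeasure (finrank ℝ E : ℝ) :=
    ⟨_, Measure.isAddLeftInvariant_eq_smul _ _⟩
  have h := hT.hausdorffMeasure_preimage_le (Nat.cast_nonneg (finrank ℝ E)) s
  rw [ENNReal.rpow_natCast] at h
  rw [hc, Measure.smul_apply, Measure.smul_apply, mul_smul_comm]
  gcongr

lemma map_le_of_antilipschitzWith {K : ℝ≥0} {T : E → E} (hT : AntilipschitzWith K T)
    (hTm : Measurable T) : μ.map T ≤ (K : ℝ≥0∞) ^ finrank ℝ E • μ :=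
  Measure.le_iff.2 fun s hs ↦ by
    rw [Measure.map_apply hTm hs]
    exact addHaar_preimage_le_of_antilipschitzWith μ hT s

lemma lintegral_comp_le_of_antilipschitzWith {K : ℝ≥0} {T : E → E} (hT : AntilipschitzWith K T)
    (hTm : Measurable T) {f : E → ℝ≥0∞} (hf : Measurable f) :
    ∫⁻ x, f (T x) ∂μ ≤ (K : ℝ≥0∞) ^ finrank ℝ E * ∫⁻ x, f x ∂μ := by
  rw [← lintegral_map hf hTm, ← smul_eq_mul, ← lintegral_smul_measure]
  exact lintegral_mono' (map_le_of_antilipschitzWith μ hT hTm) le_rfl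

lemma setLIntegral_prodMap_le_of_antilipschitzWith {K : ℝ≥0} {T : E → E}
    (hT : AntilipschitzWith K T) (hTm : Measurable T) {S : Set (E × E)} (hS : MeasurableSet S)
    {f : E × E → ℝ≥0∞} (hf : Measurable f) :
    ∫⁻ q in Prod.map T T ⁻¹' S, f (Prod.map T T q) ∂μ.prod μ
      ≤ (K : ℝ≥0∞) ^ (2 * finrank ℝ E) * ∫⁻ q in S, f q ∂μ.prod μ := by
  have h_map : (μ.prod μ).map (Prod.map T T) ≤ (K : ℝ≥0∞) ^ (2 * finrank ℝ E) • μ.prod μ := by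
    have h := map_le_of_antilipschitzWith μ hT hTm
    calc (μ.prod μ).map (Prod.map T T) = (μ.map T).prod (μ.map T) :=
          (Measure.map_prod_map μ μ hTm hTm).symm
      _ ≤ ((K : ℝ≥0∞) ^ finrank ℝ E • μ).prod ((K : ℝ≥0∞) ^ finrank ℝ E • μ) :=
          Measure.prod_mono h h
      _ = (K : ℝ≥0∞) ^ (2 * finrank ℝ E) • μ.prod μ := by
          rw [Measure.prod_smul_left, Measure.prod_smul_right, smul_smul, two_mul, pow_add]
  rw [← setLIntegral_map hS hf (hTm.prodMap hTm), ← smul_eq_mul, ← lintegral_smul_measure,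
    ← Measure.restrict_smul]
  exact lintegral_mono' (Measure.restrict_mono_measure h_map S) le_rfl

end ChangeOfVariables

section Rescale

variable {E : Type*} [NormedAddCommGroup E] [NormedSpace ℝ E]

/-- The similarity `x ↦ x₀ + R x`, which maps the unit ball onto the ball of radius `R` around
`x₀` and is used to carry estimates on the unit ball over to arbitrary balls. -/
def rescale (x₀ : E) (R : ℝ) (x : E) : E := x₀ + R • x

@[fun_prop]
lemma continuous_rescale (x₀ : E) (R : ℝ) : Continuous (rescale x₀ R) := by
  unfold rescale; fun_prop

lemma rescale_sub_rescale (x₀ : E) (R : ℝ) (x y : E) :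
    rescale x₀ R x - rescale x₀ R y = R • (x - y) := by
  rw [rescale, rescale, smul_sub, add_sub_add_left_eq_sub]

lemma dist_rescale_left (x₀ : E) {R : ℝ} (hR : 0 < R) (x : E) :
    dist (rescale x₀ R x) x₀ = R * ‖x‖ := by
  rw [rescale, dist_self_add_left, norm_smul, Real.norm_of_nonneg hR.le]

lemma rescale_preimage_ball (x₀ : E) {R : ℝ} (hR : 0 < R) (r : ℝ) :
    rescale x₀ R ⁻¹' ball x₀ (R * r) = ball 0 r := by
  ext x
  rw [mem_preimage, mem_ball, mem_ball_zero_iff, dist_rescale_left x₀ hR, mul_lt_mul_iff_right₀ hR]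

lemma rescale_preimage_closedBall (x₀ : E) {R : ℝ} (hR : 0 < R) :
    rescale x₀ R ⁻¹' closedBall x₀ R = closedBall 0 1 := by
  ext x
  rw [mem_preimage, mem_closedBall, mem_closedBall_zero_iff, dist_rescale_left x₀ hR,
    mul_le_iff_le_one_right hR]

lemma rescale_inv_smul_sub (x₀ : E) {R : ℝ} (hR : 0 < R) (y : E) :
    rescale x₀ R (R⁻¹ • (y - x₀)) = y := by
  rw [rescale, smul_inv_smul₀ hR.ne', add_sub_cancel]

lemma inv_smul_rescale_sub (x₀ : E) {R : ℝ} (hR : 0 < R) (x : E) :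
    R⁻¹ • (rescale x₀ R x - x₀) = x := by
  rw [rescale, add_sub_cancel_left, inv_smul_smul₀ hR.ne']

variable [FiniteDimensional ℝ E] [MeasurableSpace E] [BorelSpace E] (μ : Measure E)
  [μ.IsAddHaarMeasure]

lemma map_rescale (x₀ : E) {R : ℝ} (hR : 0 < R) :
    μ.map (rescale x₀ R) = (ENNReal.ofReal R ^ finrank ℝ E)⁻¹ • μ := by
  have h_comp : rescale x₀ R = (x₀ + ·) ∘ (R • ·) := rfl
  rw [h_comp, ← Measure.map_map (by fun_prop) (by fun_prop), Measure.map_addHaar_smul _ hR.ne',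
    Measure.map_smul, map_add_left_eq_self, abs_of_pos (by positivity),
    ENNReal.ofReal_inv_of_pos (by positivity), ENNReal.ofReal_pow hR.le]

lemma map_prodMap_rescale (x₀ : E) {R : ℝ} (hR : 0 < R) :
    (μ.prod μ).map (Prod.map (rescale x₀ R) (rescale x₀ R))
      = (ENNReal.ofReal R ^ (2 * finrank ℝ E))⁻¹ • μ.prod μ := by
  have h_meas : Measurable (rescale x₀ R) := (continuous_rescale x₀ R).measurable
  rw [← Measure.map_prod_map μ μ h_meas h_meas, map_rescale μ x₀ hR, Measure.prod_smul_left,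
    Measure.prod_smul_right, smul_smul, ← ENNReal.mul_inv (by simp [hR]) (by simp), ← pow_add,
    two_mul]

lemma map_rescale_cond_closedBall (x : E) {r : ℝ} (hr : 0 < r) :
    (μ[|closedBall 0 1]).map (rescale x r) = μ[|closedBall x r] := by
  have hr₀ : ENNReal.ofReal r ^ finrank ℝ E ≠ 0 := by simp [hr]
  have hr₁ : ENNReal.ofReal r ^ finrank ℝ E ≠ ⊤ := by finiteness
  have h_meas : (μ (closedBall 0 1))⁻¹ * (ENNReal.ofReal r ^ finrank ℝ E)⁻¹
      = (μ (closedBall x r))⁻¹ := by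
    rw [Measure.addHaar_closedBall' μ x hr.le, ENNReal.ofReal_pow hr.le, mul_comm,
      ENNReal.mul_inv (Or.inl hr₀) (Or.inl hr₁)]
  rw [ProbabilityTheory.cond, ProbabilityTheory.cond, Measure.map_smul,
    ← rescale_preimage_closedBall x hr,
    ← Measure.restrict_map (by fun_prop) measurableSet_closedBall, map_rescale μ x hr,
    Measure.restrict_smul, smul_smul, rescale_preimage_closedBall x hr, h_meas]

end Rescale

section Energy

variable {E F : Type*} [NormedAddCommGroup E] [NormedSpace ℝ E] [NormedAddCommGroup F]

/-- The kernel `|x - y|^{-2d}`, `d = dim E`, of the scale-invariant fractional energies; for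
`d ≥ 1` it is `∞` on the diagonal. -/
def critKernel (x y : E) : ℝ≥0∞ := (‖x - y‖ₑ ^ (2 * finrank ℝ E))⁻¹

/-- The integrand `|u(x) - u(y)|^p / |x - y|^{2d}` of the critical fractional energy. -/
def energyDensity (p : ℝ) (u : E → F) (x y : E) : ℝ≥0∞ := ‖u x - u y‖ₑ ^ p * critKernel x y

/-- The part of the critical fractional energy of `u` carried by the pairs of points in `S`. -/
def energyOn [MeasurableSpace E] (μ : Measure E) (p : ℝ) (u : E → F) (S : Set (E × E)) : ℝ≥0∞ :=
  ∫⁻ q in S, energyDensity p u q.1 q.2 ∂μ.prod μ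

/-- The pairs of points at least one of which lies in `B`: the interactions affected by changing
a map in `B`. -/
def pairsMeeting {α : Type*} (B : Set α) : Set (α × α) := (Bᶜ ×ˢ Bᶜ)ᶜ

lemma mem_pairsMeeting {α : Type*} {B : Set α} {q : α × α} :
    q ∈ pairsMeeting B ↔ q.1 ∈ B ∨ q.2 ∈ B := by
  simp only [pairsMeeting, mem_compl_iff, mem_prod]; tauto

lemma pairsMeeting_mono {α : Type*} {A B : Set α} (h : A ⊆ B) :
    pairsMeeting A ⊆ pairsMeeting B :=
  compl_subset_compl.2 (prod_mono (compl_subset_compl.2 h) (compl_subset_compl.2 h))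

lemma measurableSet_pairsMeeting {α : Type*} [MeasurableSpace α] {B : Set α}
    (hB : MeasurableSet B) : MeasurableSet (pairsMeeting B) :=
  (hB.compl.prod hB.compl).compl

lemma inv_pow_le_mul_inv_pow {a b c : ℝ≥0∞} (hc : c ≠ 0) (hc' : c ≠ ⊤) (h : a ≤ c * b) (k : ℕ) :
    (b ^ k)⁻¹ ≤ c ^ k * (a ^ k)⁻¹ := by
  have h_inv : (c ^ k * b ^ k)⁻¹ ≤ (a ^ k)⁻¹ := by
    rw [← mul_pow]
    gcongr
  calc (b ^ k)⁻¹ = c ^ k * (c ^ k * b ^ k)⁻¹ := by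
        rw [ENNReal.mul_inv (by simp [hc]) (by simp [hc']), ← mul_assoc,
          ENNReal.mul_inv_cancel (by simp [hc]) (by simp [hc']), one_mul]
    _ ≤ c ^ k * (a ^ k)⁻¹ := by gcongr

lemma critKernel_comm (x y : E) : critKernel x y = critKernel y x := by
  rw [critKernel, critKernel, enorm_sub_rev]

lemma energyDensity_comm (p : ℝ) (u : E → F) (x y : E) :
    energyDensity p u x y = energyDensity p u y x := by
  rw [energyDensity, energyDensity, enorm_sub_rev, critKernel_comm]

lemma critKernel_le_of_enorm_sub_le {c : ℝ≥0∞} (hc : c ≠ 0) (hc' : c ≠ ⊤) {x y x' y' : E}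
    (h : ‖x' - y'‖ₑ ≤ c * ‖x - y‖ₑ) :
    critKernel x y ≤ c ^ (2 * finrank ℝ E) * critKernel x' y' :=
  inv_pow_le_mul_inv_pow hc hc' h _

lemma critKernel_rescale (x₀ : E) {R : ℝ} (hR : 0 < R) (x y : E) :
    critKernel x y
      = ENNReal.ofReal R ^ (2 * finrank ℝ E) * critKernel (rescale x₀ R x) (rescale x₀ R y) := by
  have hR₀ : ENNReal.ofReal R ^ (2 * finrank ℝ E) ≠ 0 := by simp [hR]
  have hR₁ : ENNReal.ofReal R ^ (2 * finrank ℝ E) ≠ ⊤ := by finiteness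
  rw [critKernel, critKernel, rescale_sub_rescale, enorm_smul, Real.enorm_of_nonneg hR.le, mul_pow,
    ENNReal.mul_inv (Or.inl hR₀) (Or.inl hR₁), ← mul_assoc, ENNReal.mul_inv_cancel hR₀ hR₁, one_mul]

lemma rescale_preimage_pairsMeeting_ball (x₀ : E) {R : ℝ} (hR : 0 < R) (r : ℝ) :
    Prod.map (rescale x₀ R) (rescale x₀ R) ⁻¹' pairsMeeting (ball x₀ (R * r))
      = pairsMeeting (ball 0 r) := by
  ext q
  rw [← rescale_preimage_ball x₀ hR]
  simp only [mem_preimage, mem_pairsMeeting, Prod.map_fst, Prod.map_snd]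

lemma energyOn_mono [MeasurableSpace E] (μ : Measure E) (p : ℝ) (u : E → F) {S T : Set (E × E)}
    (h : S ⊆ T) : energyOn μ p u S ≤ energyOn μ p u T :=
  lintegral_mono_set h

lemma energyOn_congr [MeasurableSpace E] (μ : Measure E) (p : ℝ) {u v : E → F} {S : Set (E × E)}
    (hS : MeasurableSet S)
    (h : ∀ q ∈ S, energyDensity p u q.1 q.2 = energyDensity p v q.1 q.2) :
    energyOn μ p u S = energyOn μ p v S :=
  setLIntegral_congr_fun hS h

lemma energyOn_add_compl [MeasurableSpace E] (μ : Measure E) (p : ℝ) (u : E → F)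
    {S : Set (E × E)} (hS : MeasurableSet S) :
    energyOn μ p u S + energyOn μ p u Sᶜ = energyOn μ p u univ := by
  rw [energyOn, energyOn, energyOn, Measure.restrict_univ, lintegral_add_compl _ hS]

variable [FiniteDimensional ℝ E] [MeasurableSpace E] [BorelSpace E]

@[fun_prop]
lemma measurable_critKernel : Measurable fun q : E × E ↦ critKernel q.1 q.2 := by
  unfold critKernel; fun_prop

lemma measurable_energyDensity [MeasurableSpace F] [BorelSpace F] [SecondCountableTopology F]
    (p : ℝ) {u : E → F} (hu : Measurable u) :
    Measurable fun q : E × E ↦ energyDensity p u q.1 q.2 := by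
  unfold energyDensity; fun_prop

variable (μ : Measure E) [μ.IsAddHaarMeasure]

lemma lintegral_cond_lintegral_cond_le_energyOn [MeasurableSpace F] [BorelSpace F]
    [SecondCountableTopology F] (p : ℝ) {u : E → F} (hu : Measurable u) {A B : Set E}
    (hA : MeasurableSet A) (hB : MeasurableSet B) {ρ : ℝ} (hρ : 0 < ρ)
    (h : ∀ a ∈ A, ∀ b ∈ B, ‖a - b‖ ≤ ρ) :
    ∫⁻ a, ∫⁻ b, ‖u a - u b‖ₑ ^ p ∂μ[|B] ∂μ[|A]
      ≤ (μ A)⁻¹ * (μ B)⁻¹ * ENNReal.ofReal ρ ^ (2 * finrank ℝ E) * energyOn μ p u (A ×ˢ B) := by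
  have h_kernel : ∀ a ∈ A, ∀ b ∈ B,
      1 ≤ ENNReal.ofReal ρ ^ (2 * finrank ℝ E) * critKernel a b := fun a ha b hb ↦ by
    have h_sub : ‖a - b‖ₑ ≤ ENNReal.ofReal ρ * 1 := by
      rw [mul_one, ← ofReal_norm]
      exact ENNReal.ofReal_le_ofReal (h a ha b hb)
    simpa [critKernel] using
      inv_pow_le_mul_inv_pow (by simpa using hρ) (by simp) h_sub (2 * finrank ℝ E)
  rw [lintegral_lintegral (f := fun a b ↦ ‖u a - u b‖ₑ ^ p) (by fun_prop),
    ProbabilityTheory.cond, ProbabilityTheory.cond, Measure.prod_smul_left,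
    Measure.prod_smul_right, smul_smul, lintegral_smul_measure, smul_eq_mul,
    mul_assoc (_ * _), energyOn,
    Measure.prod_restrict, ← lintegral_const_mul _ (measurable_energyDensity p hu)]
  gcongr 1
  refine setLIntegral_mono' (hA.prod hB) fun q hq ↦ ?_
  calc ‖u q.1 - u q.2‖ₑ ^ p = ‖u q.1 - u q.2‖ₑ ^ p * 1 := (mul_one _).symm
    _ ≤ ‖u q.1 - u q.2‖ₑ ^ p * (ENNReal.ofReal ρ ^ (2 * finrank ℝ E) * critKernel q.1 q.2) := by
        gcongr
        exact h_kernel q.1 hq.1 q.2 hq.2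
    _ = ENNReal.ofReal ρ ^ (2 * finrank ℝ E) * energyDensity p u q.1 q.2 := by
        rw [energyDensity]; ring

lemma energyOn_integral_le [NormedSpace ℝ F] [MeasurableSpace F] [BorelSpace F]
    [SecondCountableTopology F] {Z : Type*} [MeasurableSpace Z] {ν : Measure Z}
    [IsProbabilityMeasure ν] {p : ℝ} (hp : 1 ≤ p) {g : Z → E → F}
    (hg : Measurable (Function.uncurry g)) (hgi : ∀ x, Integrable (g · x) ν) (S : Set (E × E))
    {A : ℝ≥0∞} (hA : ∀ᵐ z ∂ν, energyOn μ p (g z) S ≤ A) :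
    energyOn μ p (fun x ↦ ∫ z, g z x ∂ν) S ≤ A := by
  have h_meas : Measurable fun w : (E × E) × Z ↦ energyDensity p (g w.2) w.1.1 w.1.2 := by
    have : Measurable fun w : (E × E) × Z ↦ g w.2 w.1.1 :=
      hg.comp (measurable_snd.prodMk measurable_fst.fst)
    have : Measurable fun w : (E × E) × Z ↦ g w.2 w.1.2 :=
      hg.comp (measurable_snd.prodMk measurable_fst.snd)
    unfold energyDensity
    fun_prop
  have h_jensen (q : E × E) : energyDensity p (fun x ↦ ∫ z, g z x ∂ν) q.1 q.2
      ≤ ∫⁻ z, energyDensity p (g z) q.1 q.2 ∂ν := by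
    have h := enorm_integral_rpow_le_lintegral hp ((hgi q.1).sub (hgi q.2)).aestronglyMeasurable
    rw [integral_sub' (hgi q.1) (hgi q.2)] at h
    have h_diff : Measurable fun z ↦ ‖g z q.1 - g z q.2‖ₑ ^ p := by
      have h₁ : Measurable (g · q.1) := hg.comp (measurable_id.prodMk measurable_const)
      have h₂ : Measurable (g · q.2) := hg.comp (measurable_id.prodMk measurable_const)
      fun_prop
    simp only [energyDensity]
    rw [lintegral_mul_const _ h_diff]
    exact mul_le_mul_left h _
  calc energyOn μ p (fun x ↦ ∫ z, g z x ∂ν) S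
      ≤ ∫⁻ q in S, ∫⁻ z, energyDensity p (g z) q.1 q.2 ∂ν ∂μ.prod μ := lintegral_mono h_jensen
    _ = ∫⁻ z, energyOn μ p (g z) S ∂ν := lintegral_lintegral_swap h_meas.aemeasurable
    _ ≤ ∫⁻ _, A ∂ν := lintegral_mono_ae hA
    _ = A := by simp

lemma energyOn_comp_rescale [MeasurableSpace F] [BorelSpace F] [SecondCountableTopology F]
    (p : ℝ) {u : E → F} (hu : Measurable u) (x₀ : E) {R : ℝ} (hR : 0 < R) {S : Set (E × E)}
    (hS : MeasurableSet S) :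
    energyOn μ p (u ∘ rescale x₀ R) (Prod.map (rescale x₀ R) (rescale x₀ R) ⁻¹' S)
      = energyOn μ p u S := by
  have hφ : Measurable (rescale x₀ R) := (continuous_rescale x₀ R).measurable
  have hc₀ : ENNReal.ofReal R ^ (2 * finrank ℝ E) ≠ 0 := by simp [hR]
  have hc₁ : ENNReal.ofReal R ^ (2 * finrank ℝ E) ≠ ⊤ := by finiteness
  generalize hc : ENNReal.ofReal R ^ (2 * finrank ℝ E) = c at hc₀ hc₁
  have h_density (q : E × E) : energyDensity p (u ∘ rescale x₀ R) q.1 q.2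
      = c * energyDensity p u (rescale x₀ R q.1) (rescale x₀ R q.2) := by
    rw [energyDensity, energyDensity, critKernel_rescale x₀ hR, hc, mul_left_comm]
    rfl
  calc energyOn μ p (u ∘ rescale x₀ R) (Prod.map (rescale x₀ R) (rescale x₀ R) ⁻¹' S)
      = c * ∫⁻ q in Prod.map (rescale x₀ R) (rescale x₀ R) ⁻¹' S,
          energyDensity p u (rescale x₀ R q.1) (rescale x₀ R q.2) ∂μ.prod μ := by
        simp only [energyOn, h_density]
        rw [lintegral_const_mul' _ _ hc₁]
    _ = c * ∫⁻ q in S, energyDensity p u q.1 q.2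
          ∂(μ.prod μ).map (Prod.map (rescale x₀ R) (rescale x₀ R)) := by
        rw [setLIntegral_map hS (measurable_energyDensity p hu) (hφ.prodMap hφ)]
        rfl
    _ = c * (c⁻¹ * energyOn μ p u S) := by
        rw [map_prodMap_rescale μ x₀ hR, hc, Measure.restrict_smul, lintegral_smul_measure,
          smul_eq_mul, energyOn]
    _ = energyOn μ p u S := by
        rw [← mul_assoc, ENNReal.mul_inv_cancel hc₀ hc₁, one_mul]

end Energy

section Minimizers

variable {E F : Type*} [NormedAddCommGroup E] [NormedSpace ℝ E] [MeasurableSpace E]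
  [NormedAddCommGroup F] [MeasurableSpace F]

/-- Sphere-valued minimizers in `Ω`, without homotopy constraint, of the critical fractional
energy with exponent `p`; for `p = n / s` on `ℝⁿ` these are the minimizing `W^{s,n/s}`-harmonic
maps. Competitors agree with `u` everywhere outside `Ω`. -/
structure IsMinimizingHarmonic (μ : Measure E) (p : ℝ) (u : E → F) (Ω : Set E) : Prop where
  measurable : Measurable u
  norm_eq_one : ∀ x, ‖u x‖ = 1
  energy_ne_top : energyOn μ p u univ ≠ ⊤
  energy_le : ∀ v : E → F, Measurable v → (∀ x, ‖v x‖ = 1) → EqOn v u Ωᶜ →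
    energyOn μ p u univ ≤ energyOn μ p v univ

lemma IsMinimizingHarmonic.mono {μ : Measure E} {p : ℝ} {u : E → F} {Ω Ω' : Set E}
    (h : IsMinimizingHarmonic μ p u Ω) (hΩ : Ω' ⊆ Ω) : IsMinimizingHarmonic μ p u Ω' :=
  ⟨h.measurable, h.norm_eq_one, h.energy_ne_top, fun v hv hv₁ hvu ↦
    h.energy_le v hv hv₁ (hvu.mono (compl_subset_compl.2 hΩ))⟩

lemma IsMinimizingHarmonic.energyOn_ne_top {μ : Measure E} {p : ℝ} {u : E → F} {Ω : Set E}
    (h : IsMinimizingHarmonic μ p u Ω) (S : Set (E × E)) : energyOn μ p u S ≠ ⊤ :=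
  ne_top_of_le_ne_top h.energy_ne_top (energyOn_mono μ p u (subset_univ S))

lemma IsMinimizingHarmonic.energyOn_pairsMeeting_le {μ : Measure E} {p : ℝ} {u v : E → F}
    {Ω : Set E} (h : IsMinimizingHarmonic μ p u Ω) (hΩ : MeasurableSet Ω) (hv : Measurable v)
    (hv₁ : ∀ x, ‖v x‖ = 1) (hvu : EqOn v u Ωᶜ) :
    energyOn μ p u (pairsMeeting Ω) ≤ energyOn μ p v (pairsMeeting Ω) := by
  have hS := measurableSet_pairsMeeting hΩ
  have h_compl : energyOn μ p v (pairsMeeting Ω)ᶜ = energyOn μ p u (pairsMeeting Ω)ᶜ := by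
    refine energyOn_congr μ p hS.compl fun q hq ↦ ?_
    rw [pairsMeeting, compl_compl] at hq
    rw [energyDensity, energyDensity, hvu hq.1, hvu hq.2]
  have h_le := h.energy_le v hv hv₁ hvu
  rw [← energyOn_add_compl μ p u hS, ← energyOn_add_compl μ p v hS, h_compl] at h_le
  exact (ENNReal.add_le_add_iff_right (h.energyOn_ne_top _)).1 h_le

lemma IsMinimizingHarmonic.comp_rescale [FiniteDimensional ℝ E] [BorelSpace E] [BorelSpace F]
    [SecondCountableTopology F] {μ : Measure E} [μ.IsAddHaarMeasure] {p : ℝ} {u : E → F}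
    {x₀ : E} {R : ℝ} (hR : 0 < R) (h : IsMinimizingHarmonic μ p u (ball x₀ R)) :
    IsMinimizingHarmonic μ p (u ∘ rescale x₀ R) (ball 0 1) := by
  have h_energy {w : E → F} (hw : Measurable w) :
      energyOn μ p (w ∘ rescale x₀ R) univ = energyOn μ p w univ :=
    energyOn_comp_rescale μ p hw x₀ hR MeasurableSet.univ
  refine ⟨h.measurable.comp (by fun_prop), fun x ↦ h.norm_eq_one _,
    (h_energy h.measurable).trans_ne h.energy_ne_top, fun v hv hv₁ hvu ↦ ?_⟩
  let w : E → F := fun y ↦ v (R⁻¹ • (y - x₀))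
  have hw : Measurable w := hv.comp (by fun_prop)
  have hwv : w ∘ rescale x₀ R = v :=
    funext fun x ↦ congrArg v (inv_smul_rescale_sub x₀ hR x)
  have hwu : EqOn w u (ball x₀ R)ᶜ := fun y hy ↦ by
    have hy' : R⁻¹ • (y - x₀) ∈ (ball (0 : E) 1)ᶜ := by
      rwa [← rescale_preimage_ball x₀ hR 1, mul_one, mem_compl_iff, mem_preimage,
        rescale_inv_smul_sub x₀ hR]
    rw [show w y = v (R⁻¹ • (y - x₀)) from rfl, hvu hy', Function.comp_apply,
      rescale_inv_smul_sub x₀ hR]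
  rw [h_energy h.measurable, ← hwv, h_energy hw]
  exact h.energy_le w hw (fun y ↦ hv₁ _) hwu

end Minimizers

section BallAverage

lemma isProbabilityMeasure_cond_closedBall {E : Type*} [NormedAddCommGroup E] [NormedSpace ℝ E]
    [FiniteDimensional ℝ E] [MeasurableSpace E] (μ : Measure E) [μ.IsAddHaarMeasure] (x : E)
    {r : ℝ} (hr : 0 < r) : IsProbabilityMeasure μ[|closedBall x r] :=
  cond_isProbabilityMeasure_of_finite (measure_closedBall_pos μ x hr).ne'
    measure_closedBall_lt_top.ne

variable {E F : Type*} [NormedAddCommGroup E] [NormedSpace ℝ E] [FiniteDimensional ℝ E]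
  [MeasurableSpace E] [NormedAddCommGroup F] [NormedSpace ℝ F]
  (μ : Measure E) [μ.IsAddHaarMeasure]

/-- The mean value of `u` over the closed ball of radius `r > 0` around `x`. -/
def ballAverage (u : E → F) (x : E) (r : ℝ) : F := ∫ y, u y ∂μ[|closedBall x r]

section JensenBounds

variable [MeasurableSpace F] [BorelSpace F] [SecondCountableTopology F] [CompleteSpace F]

lemma enorm_ballAverage_sub_rpow_le {p : ℝ} (hp : 1 ≤ p) {u : E → F} (hu : Measurable u) {C : ℝ}
    (hC : ∀ x, ‖u x‖ ≤ C) (x : E) {r : ℝ} (hr : 0 < r) (a : F) :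
    ‖ballAverage μ u x r - a‖ₑ ^ p ≤ ∫⁻ y, ‖u y - a‖ₑ ^ p ∂μ[|closedBall x r] := by
  have := isProbabilityMeasure_cond_closedBall μ x hr
  have h_int : Integrable u μ[|closedBall x r] :=
    .of_bound hu.aestronglyMeasurable C (ae_of_all _ hC)
  have h_eq : ballAverage μ u x r - a = ∫ y, (u y - a) ∂μ[|closedBall x r] := by
    rw [integral_sub h_int (integrable_const a)]
    simp [ballAverage]
  rw [h_eq]
  exact enorm_integral_rpow_le_lintegral hp (by fun_prop)

lemma enorm_ballAverage_sub_ballAverage_rpow_le {p : ℝ} (hp : 1 ≤ p) {u : E → F}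
    (hu : Measurable u) {C : ℝ} (hC : ∀ x, ‖u x‖ ≤ C) (x y : E) {r r' : ℝ}
    (hr : 0 < r) (hr' : 0 < r') :
    ‖ballAverage μ u x r - ballAverage μ u y r'‖ₑ ^ p
      ≤ ∫⁻ a, ∫⁻ b, ‖u a - u b‖ₑ ^ p ∂μ[|closedBall y r'] ∂μ[|closedBall x r] := by
  refine (enorm_ballAverage_sub_rpow_le μ hp hu hC x hr _).trans (lintegral_mono fun a ↦ ?_)
  rw [enorm_sub_rev]
  simpa only [enorm_sub_rev] using enorm_ballAverage_sub_rpow_le μ hp hu hC y hr' (u a)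

lemma ofReal_one_sub_norm_ballAverage_rpow_le {p : ℝ} (hp : 1 ≤ p) {u : E → F}
    (hu : Measurable u) (hu₁ : ∀ x, ‖u x‖ = 1) (x : E) {r : ℝ} (hr : 0 < r) :
    ENNReal.ofReal (1 - ‖ballAverage μ u x r‖) ^ p
      ≤ ∫⁻ a, ∫⁻ b, ‖u a - u b‖ₑ ^ p ∂μ[|closedBall x r] ∂μ[|closedBall x r] := by
  have := isProbabilityMeasure_cond_closedBall μ x hr
  have h_norm (a : E) : ENNReal.ofReal (1 - ‖ballAverage μ u x r‖)
      ≤ ‖ballAverage μ u x r - u a‖ₑ := by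
    rw [enorm_sub_rev, ← ofReal_norm, ← hu₁ a]
    exact ENNReal.ofReal_le_ofReal (norm_sub_norm_le _ _)
  calc ENNReal.ofReal (1 - ‖ballAverage μ u x r‖) ^ p
      = ∫⁻ _, ENNReal.ofReal (1 - ‖ballAverage μ u x r‖) ^ p ∂μ[|closedBall x r] := by simp
    _ ≤ ∫⁻ a, ∫⁻ b, ‖u a - u b‖ₑ ^ p ∂μ[|closedBall x r] ∂μ[|closedBall x r] := by
        refine lintegral_mono fun a ↦ ?_
        calc ENNReal.ofReal (1 - ‖ballAverage μ u x r‖) ^ p ≤ ‖ballAverage μ u x r - u a‖ₑ ^ p := by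
              gcongr
              exact h_norm a
          _ ≤ ∫⁻ b, ‖u a - u b‖ₑ ^ p ∂μ[|closedBall x r] := by
              simpa only [enorm_sub_rev] using
                enorm_ballAverage_sub_rpow_le μ hp hu (fun y ↦ (hu₁ y).le) x hr (u a)

end JensenBounds

variable [BorelSpace E]

lemma ae_tendsto_ballAverage [CompleteSpace F] {u : E → F} (hu : LocallyIntegrable u μ) :
    ∀ᵐ x ∂μ, Tendsto (ballAverage μ u x) (𝓝[>] 0) (𝓝 (u x)) := by
  filter_upwards [IsUnifLocDoublingMeasure.ae_tendsto_average μ hu 1] with x hx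
  refine (hx (fun _ ↦ x) id tendsto_id ?_).congr fun r ↦ ?_
  · filter_upwards [self_mem_nhdsWithin] with r hr
    simpa using (mem_Ioi.1 hr).le
  · rw [average, Measure.restrict_apply_univ]
    rfl

variable [MeasurableSpace F] [BorelSpace F] [SecondCountableTopology F]

lemma integral_rescale_cond_closedBall {u : E → F} (hu : Measurable u) (x : E) {r : ℝ}
    (hr : 0 < r) : ∫ z, u (rescale x r z) ∂μ[|closedBall 0 1] = ballAverage μ u x r := by
  rw [ballAverage, ← map_rescale_cond_closedBall μ x hr,
    integral_map (by fun_prop) hu.aestronglyMeasurable]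

end BallAverage

section Cutoff

variable {E : Type*} [NormedAddCommGroup E]

lemma integrableOn_Ioc_min_rpow_mul_inv_pow {p : ℝ} {k : ℕ} (hk : 0 < k) (hp : k < p) :
    IntegrableOn (fun r : ℝ ↦ r ^ (k - 1) • (min r 1 ^ p * (r ^ (2 * k))⁻¹)) (Ioc 0 1) := by
  have h_int : IntegrableOn (fun r : ℝ ↦ r ^ (p - k - 1)) (Ioc 0 1) :=
    (intervalIntegrable_iff_integrableOn_Ioc_of_le zero_le_one).1
      (intervalIntegral.intervalIntegrable_rpow' (by linarith))
  refine h_int.congr_fun (fun r hr ↦ ?_) measurableSet_Ioc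
  obtain ⟨k, rfl⟩ := Nat.exists_eq_add_one.2 hk
  have hr₀ : 0 < r := hr.1
  simp only [smul_eq_mul, min_eq_left hr.2, Nat.add_sub_cancel]
  rw [Real.rpow_sub hr₀, Real.rpow_sub hr₀, Real.rpow_one, Real.rpow_natCast]
  field_simp
  ring

lemma integrableOn_Ioi_min_rpow_mul_inv_pow (p : ℝ) {k : ℕ} (hk : 0 < k) :
    IntegrableOn (fun r : ℝ ↦ r ^ (k - 1) • (min r 1 ^ p * (r ^ (2 * k))⁻¹)) (Ioi 1) := by
  have h_int : IntegrableOn (fun r : ℝ ↦ r ^ (-(k : ℝ) - 1)) (Ioi 1) :=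
    integrableOn_Ioi_rpow_of_lt (by linarith [(Nat.cast_pos (α := ℝ)).2 hk]) one_pos
  refine h_int.congr_fun (fun r hr ↦ ?_) measurableSet_Ioi
  obtain ⟨k, rfl⟩ := Nat.exists_eq_add_one.2 hk
  have hr₀ : 0 < r := one_pos.trans hr
  simp only [smul_eq_mul, min_eq_right (mem_Ioi.1 hr).le, Real.one_rpow, Nat.add_sub_cancel]
  rw [Real.rpow_sub hr₀, Real.rpow_neg hr₀.le, Real.rpow_one, Real.rpow_natCast]
  field_simp
  ring

/-- The function `x ↦ 0` for `|x| ≤ 1/2`, `1` for `|x| ≥ 3/4`, interpolating linearly in between. -/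
def cutoff (x : E) : ℝ := max 0 (min 1 (4 * ‖x‖ - 2))

@[fun_prop]
lemma continuous_cutoff : Continuous (cutoff : E → ℝ) := by
  unfold cutoff; fun_prop

lemma cutoff_nonneg (x : E) : 0 ≤ cutoff x := le_max_left _ _

lemma cutoff_le_one (x : E) : cutoff x ≤ 1 := max_le zero_le_one (min_le_left _ _)

lemma cutoff_eq_zero {x : E} (hx : ‖x‖ ≤ 1 / 2) : cutoff x = 0 :=
  max_eq_left ((min_le_right _ _).trans (by linarith))

lemma cutoff_eq_one {x : E} (hx : 3 / 4 ≤ ‖x‖) : cutoff x = 1 := by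
  rw [cutoff, min_eq_left (by linarith), max_eq_right zero_le_one]

lemma lipschitzWith_cutoff : LipschitzWith 4 (cutoff : E → ℝ) := by
  have h_affine : LipschitzWith 4 fun x : E ↦ 4 * ‖x‖ - 2 := by
    refine .of_dist_le_mul fun x y ↦ ?_
    rw [Real.dist_eq, sub_sub_sub_cancel_right, ← mul_sub, abs_mul, dist_eq_norm]
    push_cast
    rw [abs_of_pos four_pos]
    gcongr
    exact abs_norm_sub_norm_le x y
  exact (h_affine.const_min 1).const_max 0

lemma enorm_cutoff_sub_cutoff_le_one (x y : E) : ‖cutoff x - cutoff y‖ₑ ≤ 1 := by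
  have h : |cutoff x - cutoff y| ≤ 1 := by
    rw [abs_le]
    constructor <;>
      linarith [cutoff_nonneg x, cutoff_nonneg y, cutoff_le_one x, cutoff_le_one y]
  simpa [← ofReal_norm] using h

lemma enorm_cutoff_sub_cutoff_le (x y : E) :
    ‖cutoff x - cutoff y‖ₑ ≤ 4 * min ‖x - y‖ₑ 1 := by
  rw [mul_min]
  refine le_min ?_ ((enorm_cutoff_sub_cutoff_le_one x y).trans (by norm_num))
  simpa only [edist_eq_enorm_sub] using! lipschitzWith_cutoff x y

variable [NormedSpace ℝ E]

/-- The weight `(1 + |y|)^{-2d}`, `d = dim E`, comparable with the kernel `critKernel x y` when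
`x` ranges over the unit ball and `y` stays away from `x`. -/
def farWeight (y : E) : ℝ≥0∞ := ((1 + ‖y‖ₑ) ^ (2 * finrank ℝ E))⁻¹

variable [MeasurableSpace E] [BorelSpace E]

@[fun_prop]
lemma measurable_farWeight : Measurable (farWeight : E → ℝ≥0∞) := by
  unfold farWeight; fun_prop

lemma lintegral_energyDensity_cutoff_le_of_le_norm (μ : Measure E) {p : ℝ} (hp : 0 < p)
    {y : E} (hy : 2 ≤ ‖y‖) :
    ∫⁻ x, energyDensity p cutoff x y ∂μ
      ≤ 3 ^ (2 * finrank ℝ E) * μ (closedBall 0 1) * farWeight y := by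
  have h_density (x : E) : energyDensity p cutoff x y
      ≤ (closedBall 0 1).indicator (fun _ ↦ 3 ^ (2 * finrank ℝ E) * farWeight y) x := by
    by_cases hx : x ∈ closedBall 0 1
    · rw [indicator_of_mem hx]
      rw [mem_closedBall_zero_iff] at hx
      have h_sub : 1 + ‖y‖ₑ ≤ 3 * ‖x - y‖ₑ := by
        rw [← ofReal_norm, ← ofReal_norm, ← ENNReal.ofReal_one,
          ← ENNReal.ofReal_add zero_le_one (norm_nonneg y), ← ENNReal.ofReal_ofNat 3,
          ← ENNReal.ofReal_mul (by norm_num)]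
        refine ENNReal.ofReal_le_ofReal ?_
        linarith [norm_sub_norm_le y x, norm_sub_rev x y]
      calc energyDensity p cutoff x y ≤ 1 * critKernel x y := by
            rw [energyDensity]
            gcongr
            exact ENNReal.rpow_le_one (enorm_cutoff_sub_cutoff_le_one x y) hp.le
        _ ≤ 3 ^ (2 * finrank ℝ E) * farWeight y := by
            rw [one_mul]
            exact inv_pow_le_mul_inv_pow (by norm_num) (by norm_num) h_sub _
    · rw [mem_closedBall_zero_iff, not_le] at hx
      rw [energyDensity, cutoff_eq_one (by linarith), cutoff_eq_one (by linarith)]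
      simp [ENNReal.zero_rpow_of_pos hp]
  calc ∫⁻ x, energyDensity p cutoff x y ∂μ
      ≤ ∫⁻ x, (closedBall 0 1).indicator (fun _ ↦ 3 ^ (2 * finrank ℝ E) * farWeight y) x ∂μ :=
        lintegral_mono h_density
    _ = 3 ^ (2 * finrank ℝ E) * μ (closedBall 0 1) * farWeight y := by
        rw [lintegral_indicator_const measurableSet_closedBall, mul_right_comm]

variable [FiniteDimensional ℝ E] (μ : Measure E) [μ.IsAddHaarMeasure]

lemma lintegral_min_enorm_rpow_mul_inv_pow_ne_top [Nontrivial E] {p : ℝ} (hp : finrank ℝ E < p) :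
    ∫⁻ h : E, min ‖h‖ₑ 1 ^ p * (‖h‖ₑ ^ (2 * finrank ℝ E))⁻¹ ∂μ ≠ ⊤ := by
  have hd : 0 < finrank ℝ E := Module.finrank_pos
  have hp₀ : 0 < p := (Nat.cast_nonneg _).trans_lt hp
  have h_int : Integrable (fun h : E ↦ min ‖h‖ 1 ^ p * (‖h‖ ^ (2 * finrank ℝ E))⁻¹) μ := by
    rw [integrable_fun_norm_addHaar μ (f := fun r ↦ min r 1 ^ p * (r ^ (2 * finrank ℝ E))⁻¹),
      ← Ioc_union_Ioi_eq_Ioi zero_le_one, integrableOn_union]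
    exact ⟨integrableOn_Ioc_min_rpow_mul_inv_pow hd hp, integrableOn_Ioi_min_rpow_mul_inv_pow p hd⟩
  refine ne_top_of_le_ne_top h_int.lintegral_lt_top.ne (lintegral_mono fun h ↦ ?_)
  rcases eq_or_ne h 0 with rfl | hh
  · simp [hp₀]
  · have : 0 < ‖h‖ := norm_pos_iff.2 hh
    rw [ENNReal.ofReal_mul (by positivity), ENNReal.ofReal_inv_of_pos (by positivity),
      ← ENNReal.ofReal_rpow_of_nonneg (by positivity) hp₀.le, ENNReal.ofReal_min, ofReal_norm,
      ENNReal.ofReal_pow (norm_nonneg _), ofReal_norm, ENNReal.ofReal_one]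

lemma lintegral_energyDensity_cutoff_le_of_norm_le {p : ℝ} (hp : 0 ≤ p) {y : E} (hy : ‖y‖ ≤ 2) :
    ∫⁻ x, energyDensity p cutoff x y ∂μ
      ≤ 4 ^ p * (∫⁻ h : E, min ‖h‖ₑ 1 ^ p * (‖h‖ₑ ^ (2 * finrank ℝ E))⁻¹ ∂μ)
        * 3 ^ (2 * finrank ℝ E) * farWeight y := by
  have h_density (x : E) : energyDensity p cutoff x y
      ≤ 4 ^ p * (min ‖x - y‖ₑ 1 ^ p * (‖x - y‖ₑ ^ (2 * finrank ℝ E))⁻¹) := by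
    rw [← mul_assoc, ← ENNReal.mul_rpow_of_nonneg _ _ hp, energyDensity, critKernel]
    gcongr
    exact enorm_cutoff_sub_cutoff_le x y
  have h_weight : 1 ≤ 3 ^ (2 * finrank ℝ E) * farWeight y := by
    have h_le : 1 + ‖y‖ₑ ≤ 3 * 1 := by
      rw [← ofReal_norm, ← ENNReal.ofReal_one, ← ENNReal.ofReal_add zero_le_one (norm_nonneg y),
        ← ENNReal.ofReal_ofNat 3, ← ENNReal.ofReal_mul (by norm_num)]
      exact ENNReal.ofReal_le_ofReal (by linarith)
    simpa [farWeight] using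
      inv_pow_le_mul_inv_pow (by norm_num) (by norm_num) h_le (2 * finrank ℝ E)
  calc ∫⁻ x, energyDensity p cutoff x y ∂μ
      ≤ ∫⁻ x, 4 ^ p * (min ‖x - y‖ₑ 1 ^ p * (‖x - y‖ₑ ^ (2 * finrank ℝ E))⁻¹) ∂μ :=
        lintegral_mono h_density
    _ = 4 ^ p * (∫⁻ h : E, min ‖h‖ₑ 1 ^ p * (‖h‖ₑ ^ (2 * finrank ℝ E))⁻¹ ∂μ) * 1 := by
        rw [lintegral_const_mul _ (by fun_prop), lintegral_sub_right_eq_self (μ := μ)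
          (fun h ↦ min ‖h‖ₑ 1 ^ p * (‖h‖ₑ ^ (2 * finrank ℝ E))⁻¹) y, mul_one]
    _ ≤ _ := by
        rw [mul_assoc (_ * _)]
        gcongr

lemma exists_lintegral_energyDensity_cutoff_le [Nontrivial E] {p : ℝ} (hp : finrank ℝ E < p) :
    ∃ C : ℝ≥0∞, C ≠ ⊤ ∧ ∀ y, ∫⁻ x, energyDensity p cutoff x y ∂μ ≤ C * farWeight y := by
  have hp₀ : 0 < p := (Nat.cast_nonneg _).trans_lt hp
  have h_kernel := lintegral_min_enorm_rpow_mul_inv_pow_ne_top μ hp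
  have h_ball : μ (closedBall 0 1) ≠ ⊤ := measure_closedBall_lt_top.ne
  refine ⟨4 ^ p * (∫⁻ h : E, min ‖h‖ₑ 1 ^ p * (‖h‖ₑ ^ (2 * finrank ℝ E))⁻¹ ∂μ)
    * 3 ^ (2 * finrank ℝ E) + 3 ^ (2 * finrank ℝ E) * μ (closedBall 0 1), by finiteness,
    fun y ↦ ?_⟩
  rw [add_mul]
  rcases le_total ‖y‖ 2 with hy | hy
  · exact le_add_right (lintegral_energyDensity_cutoff_le_of_norm_le μ hp₀.le hy)
  · exact le_add_left (lintegral_energyDensity_cutoff_le_of_le_norm μ hp₀ hy)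

end Cutoff

section Deformation

variable {E : Type*} [NormedAddCommGroup E]

/-- The pairs of points meeting the unit ball but not the ball of radius `1/4`: the interactions
of `u` that control the energy of a competitor which is constant near the centre. -/
def collarPairs : Set (E × E) := pairsMeeting (ball 0 1) \ pairsMeeting (ball 0 (1 / 4))

lemma prod_subset_collarPairs {A B : Set E} (hA : A ⊆ (ball 0 (1 / 4))ᶜ)
    (hB : B ⊆ (ball 0 (1 / 4))ᶜ) (hB₁ : B ⊆ ball 0 1) : A ×ˢ B ⊆ collarPairs (E := E) :=
  fun _ hq ↦ ⟨mem_pairsMeeting.2 (Or.inr (hB₁ hq.2)), fun h ↦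
    (mem_pairsMeeting.1 h).elim (hA hq.1) (hB hq.2)⟩

lemma measurableSet_collarPairs [MeasurableSpace E] [BorelSpace E] :
    MeasurableSet (collarPairs (E := E)) :=
  (measurableSet_pairsMeeting measurableSet_ball).diff
    (measurableSet_pairsMeeting measurableSet_ball)

/-- A quarter of the distance from `x` to the complement of the unit ball: the radius at which a
map is mollified at `x`, so that its values on and outside the unit sphere are kept. -/
def averagingRadius (x : E) : ℝ := max (1 - ‖x‖) 0 / 4

lemma averagingRadius_nonneg (x : E) : 0 ≤ averagingRadius x :=
  div_nonneg (le_max_right _ _) zero_le_four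

lemma averagingRadius_of_norm_le_one {x : E} (hx : ‖x‖ ≤ 1) :
    averagingRadius x = (1 - ‖x‖) / 4 := by
  rw [averagingRadius, max_eq_left (sub_nonneg.2 hx)]

lemma averagingRadius_of_one_le_norm {x : E} (hx : 1 ≤ ‖x‖) : averagingRadius x = 0 := by
  rw [averagingRadius, max_eq_right (sub_nonpos.2 hx), zero_div]

lemma abs_averagingRadius_sub_le (x y : E) :
    |averagingRadius x - averagingRadius y| ≤ ‖x - y‖ / 4 := by
  have h_max := abs_max_sub_max_le_abs (1 - ‖x‖) (1 - ‖y‖) 0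
  rw [sub_sub_sub_cancel_left] at h_max
  rw [averagingRadius, averagingRadius, ← sub_div, abs_div, abs_of_pos (four_pos (α := ℝ))]
  gcongr
  exact h_max.trans (norm_sub_rev x y ▸ abs_norm_sub_norm_le y x)

lemma closedBall_averagingRadius_subset_ball {x : E} (hx : ‖x‖ < 1) :
    closedBall x (averagingRadius x) ⊆ ball 0 1 := fun y hy ↦ by
  rw [mem_closedBall, dist_eq_norm, averagingRadius_of_norm_le_one hx.le] at hy
  rw [mem_ball_zero_iff]
  linarith [norm_sub_norm_le y x]

lemma closedBall_averagingRadius_subset_compl_ball {x : E} (hx : 1 / 2 ≤ ‖x‖) :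
    closedBall x (averagingRadius x) ⊆ (ball 0 (1 / 4))ᶜ := fun y hy ↦ by
  have h_radius : averagingRadius x ≤ ‖x‖ / 4 := by
    unfold averagingRadius
    gcongr
    exact max_le (by linarith) (norm_nonneg x)
  rw [mem_closedBall, dist_eq_norm'] at hy
  rw [mem_compl_iff, mem_ball_zero_iff, not_lt]
  linarith [norm_sub_norm_le x y]

lemma closedBall_prod_closedBall_averagingRadius_subset_collarPairs {x : E} (hx : 1 / 2 ≤ ‖x‖)
    (hx₁ : ‖x‖ < 1) :
    closedBall x (averagingRadius x) ×ˢ closedBall x (averagingRadius x) ⊆ collarPairs :=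
  prod_subset_collarPairs (closedBall_averagingRadius_subset_compl_ball hx)
    (closedBall_averagingRadius_subset_compl_ball hx) (closedBall_averagingRadius_subset_ball hx₁)

variable [NormedSpace ℝ E]

/-- The deformation `x ↦ x + r(x) z` of the identity, with `r` the averaging radius; averaging
`u ∘ deform z` over `z` in the unit ball gives the mollification of `u` with radius `r`. -/
def deform (z x : E) : E := rescale x (averagingRadius x) z

lemma deform_of_one_le_norm (z : E) {x : E} (hx : 1 ≤ ‖x‖) : deform z x = x := by
  rw [deform, rescale, averagingRadius_of_one_le_norm hx, zero_smul, add_zero]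

lemma deform_mem_closedBall {z : E} (hz : ‖z‖ ≤ 1) (x : E) :
    deform z x ∈ closedBall x (averagingRadius x) := by
  rw [deform, rescale, mem_closedBall, dist_self_add_left, norm_smul,
    Real.norm_of_nonneg (averagingRadius_nonneg x)]
  exact mul_le_of_le_one_right (averagingRadius_nonneg x) hz

lemma norm_deform_sub_deform_sub_le {z : E} (hz : ‖z‖ ≤ 1) (x y : E) :
    ‖deform z x - deform z y - (x - y)‖ ≤ ‖x - y‖ / 4 := by
  have h_eq : deform z x - deform z y - (x - y)
      = (averagingRadius x - averagingRadius y) • z := by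
    simp only [deform, rescale]; module
  rw [h_eq, norm_smul, Real.norm_eq_abs]
  exact (mul_le_of_le_one_right (abs_nonneg _) hz).trans (abs_averagingRadius_sub_le x y)

lemma lipschitzWith_deform {z : E} (hz : ‖z‖ ≤ 1) : LipschitzWith 2 (deform z) :=
  .of_dist_le_mul fun x y ↦ by
    rw [dist_eq_norm, dist_eq_norm, NNReal.coe_ofNat]
    linarith [norm_deform_sub_deform_sub_le hz x y, norm_nonneg (x - y),
      norm_sub_norm_le (deform z x - deform z y) (x - y)]

lemma antilipschitzWith_deform {z : E} (hz : ‖z‖ ≤ 1) : AntilipschitzWith 2 (deform z) :=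
  .of_le_mul_dist fun x y ↦ by
    rw [dist_eq_norm, dist_eq_norm, NNReal.coe_ofNat]
    have h := norm_deform_sub_deform_sub_le hz x y
    rw [norm_sub_rev] at h
    linarith [norm_nonneg (x - y), norm_sub_norm_le (x - y) (deform z x - deform z y)]

lemma farWeight_le_farWeight_deform {z : E} (hz : ‖z‖ ≤ 1) (x : E) :
    farWeight x ≤ 2 ^ (2 * finrank ℝ E) * farWeight (deform z x) := by
  refine inv_pow_le_mul_inv_pow (by norm_num) (by norm_num) ?_ _
  have h_dist := deform_mem_closedBall hz x
  rw [mem_closedBall, dist_eq_norm] at h_dist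
  have h_radius : averagingRadius x ≤ 1 := by
    rw [averagingRadius, div_le_one four_pos]
    exact max_le (by linarith [norm_nonneg x]) zero_le_four
  have h_real : 1 + ‖deform z x‖ ≤ 2 * (1 + ‖x‖) := by
    linarith [norm_sub_norm_le (deform z x) x, norm_nonneg x]
  have h := ENNReal.ofReal_le_ofReal h_real
  rwa [ENNReal.ofReal_mul zero_le_two, ENNReal.ofReal_add zero_le_one (norm_nonneg _),
    ENNReal.ofReal_add zero_le_one (norm_nonneg _), ofReal_norm, ofReal_norm, ENNReal.ofReal_one,
    ENNReal.ofReal_ofNat] at h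

lemma deform_mem_collarPairs {z : E} (hz : ‖z‖ ≤ 1) {x y : E}
    (hxy : (x, y) ∈ pairsMeeting (ball 0 1)) (hx : 1 / 2 ≤ ‖x‖) (hy : 1 / 2 ≤ ‖y‖) :
    (deform z x, deform z y) ∈ collarPairs := by
  have h_ball {w : E} (hw : w ∈ ball 0 1) : deform z w ∈ ball 0 1 :=
    closedBall_averagingRadius_subset_ball (mem_ball_zero_iff.1 hw) (deform_mem_closedBall hz w)
  have h_compl {w : E} (hw : 1 / 2 ≤ ‖w‖) : deform z w ∈ (ball 0 (1 / 4))ᶜ :=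
    closedBall_averagingRadius_subset_compl_ball hw (deform_mem_closedBall hz w)
  refine ⟨mem_pairsMeeting.2 ((mem_pairsMeeting.1 hxy).imp h_ball h_ball), fun h ↦ ?_⟩
  exact (mem_pairsMeeting.1 h).elim (h_compl hx) (h_compl hy)

lemma energyOn_pairsMeeting_eq_add_collarPairs {F : Type*} [NormedAddCommGroup F]
    [MeasurableSpace E] [BorelSpace E] (μ : Measure E) (p : ℝ) (u : E → F) :
    energyOn μ p u (pairsMeeting (ball 0 1))
      = energyOn μ p u (pairsMeeting (ball 0 (1 / 4))) + energyOn μ p u collarPairs := by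
  rw [energyOn, energyOn, energyOn, collarPairs,
    ← lintegral_inter_add_sdiff _ (pairsMeeting (ball 0 1))
    (measurableSet_pairsMeeting measurableSet_ball), inter_eq_self_of_subset_right
    (pairsMeeting_mono (ball_subset_ball (by norm_num : (1 / 4 : ℝ) ≤ 1)))]

end Deformation

section Competitor

variable {E F : Type*} [NormedAddCommGroup E] [NormedAddCommGroup F]

/-- The `p`-th power of the deviation of `u` from the value `c`, restricted to the complement of
the ball of radius `1/4`. -/
def outerDeviation (p : ℝ) (u : E → F) (c : F) : E → ℝ≥0∞ :=
  (ball 0 (1 / 4))ᶜ.indicator fun x ↦ ‖u x - c‖ₑ ^ p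

lemma measurable_outerDeviation [MeasurableSpace E] [BorelSpace E] [MeasurableSpace F]
    [BorelSpace F] [SecondCountableTopology F] (p : ℝ) {u : E → F} (hu : Measurable u) (c : F) :
    Measurable (outerDeviation p u c) :=
  Measurable.indicator (by fun_prop) measurableSet_ball.compl

variable [NormedSpace ℝ E]

lemma outerDeviation_deform (p : ℝ) (u : E → F) (c : F) {z : E} (hz : ‖z‖ ≤ 1) {x : E}
    (hx : 1 / 2 ≤ ‖x‖) : outerDeviation p u c (deform z x) = ‖u (deform z x) - c‖ₑ ^ p :=
  indicator_of_mem
    (closedBall_averagingRadius_subset_compl_ball hx (deform_mem_closedBall hz x)) _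

/-- The deviation of `u` from `c` away from the centre, weighted as in the energy. -/
def collarDeviation [MeasurableSpace E] (μ : Measure E) (p : ℝ) (u : E → F) (c : F) : ℝ≥0∞ :=
  ∫⁻ x, outerDeviation p u c x * farWeight x ∂μ

section Deform

variable [FiniteDimensional ℝ E] [MeasurableSpace E] [BorelSpace E] [MeasurableSpace F]
  [BorelSpace F] [SecondCountableTopology F]

@[fun_prop]
lemma measurable_deform (z : E) : Measurable (deform z) := by
  unfold deform rescale averagingRadius; fun_prop

variable (μ : Measure E) [μ.IsAddHaarMeasure]

lemma lintegral_energyDensity_cutoff_mul_outerDeviation_le (p : ℝ) {u : E → F}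
    (hu : Measurable u) (c : F) {z : E} (hz : ‖z‖ ≤ 1) {C : ℝ≥0∞}
    (hC : ∀ y, ∫⁻ x, energyDensity p cutoff x y ∂μ ≤ C * farWeight y) :
    ∫⁻ y, ∫⁻ x, energyDensity p cutoff x y * outerDeviation p u c (deform z y) ∂μ ∂μ
      ≤ C * 2 ^ (3 * finrank ℝ E) * collarDeviation μ p u c := by
  have h_dev := measurable_outerDeviation p hu c
  have h_cutoff (y : E) : Measurable fun x ↦ energyDensity p cutoff x y := by
    have h_meas : Measurable (cutoff : E → ℝ) := by fun_prop
    unfold energyDensity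
    fun_prop
  calc ∫⁻ y, ∫⁻ x, energyDensity p cutoff x y * outerDeviation p u c (deform z y) ∂μ ∂μ
      ≤ ∫⁻ y, C * 2 ^ (2 * finrank ℝ E)
          * (outerDeviation p u c (deform z y) * farWeight (deform z y)) ∂μ := by
        refine lintegral_mono fun y ↦ ?_
        rw [lintegral_mul_const _ (h_cutoff y)]
        calc (∫⁻ x, energyDensity p cutoff x y ∂μ) * outerDeviation p u c (deform z y)
            ≤ C * (2 ^ (2 * finrank ℝ E) * farWeight (deform z y))
                * outerDeviation p u c (deform z y) := by
              gcongr
              exact (hC y).trans (by gcongr; exact farWeight_le_farWeight_deform hz y)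
          _ = _ := by ring
    _ ≤ C * 2 ^ (2 * finrank ℝ E) * (2 ^ finrank ℝ E * collarDeviation μ p u c) := by
        rw [lintegral_const_mul _ (by fun_prop)]
        gcongr
        exact lintegral_comp_le_of_antilipschitzWith μ (antilipschitzWith_deform hz)
          (measurable_deform z) (f := fun y ↦ outerDeviation p u c y * farWeight y) (by fun_prop)
    _ = C * 2 ^ (3 * finrank ℝ E) * collarDeviation μ p u c := by ring

lemma lintegral_energyDensity_cutoff_mul_outerDeviation_add_le (p : ℝ) {u : E → F}
    (hu : Measurable u) (c : F) {z : E} (hz : ‖z‖ ≤ 1) {C : ℝ≥0∞}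
    (hC : ∀ y, ∫⁻ x, energyDensity p cutoff x y ∂μ ≤ C * farWeight y) :
    ∫⁻ q, energyDensity p cutoff q.1 q.2
        * (outerDeviation p u c (deform z q.1) + outerDeviation p u c (deform z q.2)) ∂μ.prod μ
      ≤ 2 * (C * 2 ^ (3 * finrank ℝ E) * collarDeviation μ p u c) := by
  have h_dev := measurable_outerDeviation p hu c
  have h_cutoff : Measurable fun q : E × E ↦ energyDensity p cutoff q.1 q.2 :=
    measurable_energyDensity p (by fun_prop)
  have h_cross := lintegral_energyDensity_cutoff_mul_outerDeviation_le μ p hu c hz hC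
  simp only [mul_add]
  rw [lintegral_add_left (by fun_prop), lintegral_prod _ (by fun_prop),
    lintegral_prod_symm _ (by fun_prop), two_mul]
  refine add_le_add ?_ h_cross
  simpa only [energyDensity_comm p cutoff] using h_cross

lemma setLIntegral_indicator_collarPairs_deform_le (p : ℝ) {u : E → F} (hu : Measurable u) {z : E}
    (hz : ‖z‖ ≤ 1) :
    ∫⁻ q, collarPairs.indicator (fun q ↦ energyDensity p u q.1 q.2) (deform z q.1, deform z q.2)
        ∂μ.prod μ ≤ 2 ^ (2 * finrank ℝ E) * energyOn μ p u collarPairs := by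
  have h := setLIntegral_prodMap_le_of_antilipschitzWith μ (antilipschitzWith_deform hz)
    (measurable_deform z) measurableSet_collarPairs (measurable_energyDensity p hu)
  rw [← lintegral_indicator (measurableSet_collarPairs.preimage
    ((measurable_deform z).prodMap (measurable_deform z)))] at h
  exact h

end Deform

variable [NormedSpace ℝ F]

/-- The interpolation between the constant `c` near the centre and `u ∘ deform z`. -/
def shiftedCompetitor (u : E → F) (c : F) (z x : E) : F := c + cutoff x • (u (deform z x) - c)

lemma enorm_shiftedCompetitor_sub_rpow_le_of_cutoff_eq_zero {p : ℝ} (hp : 0 < p) (u : E → F)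
    (c : F) {z : E} (hz : ‖z‖ ≤ 1) (x : E) {y : E} (hy : cutoff y = 0) :
    ‖shiftedCompetitor u c z x - shiftedCompetitor u c z y‖ₑ ^ p
      ≤ ‖cutoff x - cutoff y‖ₑ ^ p * outerDeviation p u c (deform z x) := by
  have h_eq : shiftedCompetitor u c z x - shiftedCompetitor u c z y
      = (cutoff x - cutoff y) • (u (deform z x) - c) := by
    simp only [shiftedCompetitor, hy]; module
  rw [h_eq, enorm_smul, ENNReal.mul_rpow_of_nonneg _ _ hp.le]
  rcases le_total ‖x‖ (1 / 2) with hx | hx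
  · rw [cutoff_eq_zero hx, hy]
    simp [hp]
  · rw [outerDeviation_deform p u c hz hx]

lemma enorm_shiftedCompetitor_sub_rpow_le {p : ℝ} (hp : 1 ≤ p) (u : E → F) (c : F) (z x y : E) :
    ‖shiftedCompetitor u c z x - shiftedCompetitor u c z y‖ₑ ^ p
      ≤ 2 ^ (p - 1) * (‖u (deform z x) - u (deform z y)‖ₑ ^ p
        + ‖cutoff x - cutoff y‖ₑ ^ p * ‖u (deform z y) - c‖ₑ ^ p) := by
  have hp₀ : 0 ≤ p := zero_le_one.trans hp
  have h_eq : shiftedCompetitor u c z x - shiftedCompetitor u c z y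
      = cutoff x • (u (deform z x) - u (deform z y))
        + (cutoff x - cutoff y) • (u (deform z y) - c) := by
    simp only [shiftedCompetitor]; module
  have h_cutoff : ‖cutoff x‖ₑ ≤ 1 := by
    simpa [← ofReal_norm, abs_of_nonneg (cutoff_nonneg x)] using cutoff_le_one x
  calc ‖shiftedCompetitor u c z x - shiftedCompetitor u c z y‖ₑ ^ p
      ≤ (‖u (deform z x) - u (deform z y)‖ₑ
          + ‖cutoff x - cutoff y‖ₑ * ‖u (deform z y) - c‖ₑ) ^ p := by
        rw [h_eq]
        gcongr
        refine (enorm_add_le _ _).trans ?_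
        rw [enorm_smul, enorm_smul]
        gcongr
        exact mul_le_of_le_one_left' h_cutoff
    _ ≤ _ := by
        rw [← ENNReal.mul_rpow_of_nonneg _ _ hp₀]
        exact ENNReal.rpow_add_le_mul_rpow_add_rpow _ _ hp

lemma energyDensity_shiftedCompetitor_le_of_le_norm {p : ℝ} (hp : 1 ≤ p) (u : E → F) (c : F)
    {z : E} (hz : ‖z‖ ≤ 1) (x : E) {y : E} (hy : 1 / 2 ≤ ‖y‖) :
    energyDensity p (shiftedCompetitor u c z) x y ≤ 2 ^ (p - 1) *
      (2 ^ (2 * finrank ℝ E) * energyDensity p u (deform z x) (deform z y)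
        + energyDensity p cutoff x y * outerDeviation p u c (deform z y)) := by
  have h_kernel : critKernel x y
      ≤ 2 ^ (2 * finrank ℝ E) * critKernel (deform z x) (deform z y) :=
    critKernel_le_of_enorm_sub_le (by norm_num) (by norm_num) <| by
      simpa only [edist_eq_enorm_sub] using! lipschitzWith_deform hz x y
  rw [outerDeviation_deform p u c hz hy]
  calc energyDensity p (shiftedCompetitor u c z) x y
      ≤ 2 ^ (p - 1) * (‖u (deform z x) - u (deform z y)‖ₑ ^ p
        + ‖cutoff x - cutoff y‖ₑ ^ p * ‖u (deform z y) - c‖ₑ ^ p) * critKernel x y := by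
        rw [energyDensity]
        gcongr
        exact enorm_shiftedCompetitor_sub_rpow_le hp u c z x y
    _ = 2 ^ (p - 1) * (‖u (deform z x) - u (deform z y)‖ₑ ^ p * critKernel x y
        + energyDensity p cutoff x y * ‖u (deform z y) - c‖ₑ ^ p) := by
        rw [energyDensity]; ring
    _ ≤ 2 ^ (p - 1) * (‖u (deform z x) - u (deform z y)‖ₑ ^ p
          * (2 ^ (2 * finrank ℝ E) * critKernel (deform z x) (deform z y))
        + energyDensity p cutoff x y * ‖u (deform z y) - c‖ₑ ^ p) := by gcongr
    _ = _ := by rw [mul_left_comm (‖_‖ₑ ^ p)]; rfl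

lemma energyDensity_shiftedCompetitor_le {p : ℝ} (hp : 1 ≤ p) (u : E → F) (c : F) {z : E}
    (hz : ‖z‖ ≤ 1) {x y : E} (hxy : (x, y) ∈ pairsMeeting (ball 0 1)) :
    energyDensity p (shiftedCompetitor u c z) x y ≤ 2 ^ (p - 1) *
      (2 ^ (2 * finrank ℝ E) * collarPairs.indicator (fun q ↦ energyDensity p u q.1 q.2)
          (deform z x, deform z y)
        + energyDensity p cutoff x y
          * (outerDeviation p u c (deform z x) + outerDeviation p u c (deform z y))) := by
  have hp₀ : 0 < p := by linarith
  have h_one : (1 : ℝ≥0∞) ≤ 2 ^ (p - 1) := by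
    simpa using ENNReal.rpow_le_rpow (one_le_two (α := ℝ≥0∞)) (sub_nonneg.2 hp)
  rcases le_total ‖x‖ (1 / 2) with hx | hx
  · refine le_mul_of_one_le_of_le h_one (le_add_left ?_)
    rw [energyDensity_comm, energyDensity_comm p cutoff, energyDensity, energyDensity,
      mul_right_comm]
    gcongr
    refine le_trans ?_ (mul_le_mul_right le_add_self _)
    exact enorm_shiftedCompetitor_sub_rpow_le_of_cutoff_eq_zero hp₀ u c hz y (cutoff_eq_zero hx)
  rcases le_total ‖y‖ (1 / 2) with hy | hy
  · refine le_mul_of_one_le_of_le h_one (le_add_left ?_)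
    rw [energyDensity, energyDensity, mul_right_comm]
    gcongr
    refine le_trans ?_ (mul_le_mul_right le_self_add _)
    exact enorm_shiftedCompetitor_sub_rpow_le_of_cutoff_eq_zero hp₀ u c hz x (cutoff_eq_zero hy)
  · rw [indicator_of_mem (deform_mem_collarPairs hz hxy hx hy)]
    refine (energyDensity_shiftedCompetitor_le_of_le_norm hp u c hz x hy).trans ?_
    gcongr
    exact le_add_self

variable [FiniteDimensional ℝ E] [MeasurableSpace E] [BorelSpace E] [MeasurableSpace F]
  [BorelSpace F] [SecondCountableTopology F]

variable (μ : Measure E) [μ.IsAddHaarMeasure]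

lemma energyOn_shiftedCompetitor_le {p : ℝ} (hp : 1 ≤ p) {u : E → F} (hu : Measurable u) (c : F)
    {z : E} (hz : ‖z‖ ≤ 1) {C : ℝ≥0∞}
    (hC : ∀ y, ∫⁻ x, energyDensity p cutoff x y ∂μ ≤ C * farWeight y) :
    energyOn μ p (shiftedCompetitor u c z) (pairsMeeting (ball 0 1))
      ≤ 2 ^ (p - 1) * (2 ^ (4 * finrank ℝ E) * energyOn μ p u collarPairs
        + 2 * (C * 2 ^ (3 * finrank ℝ E) * collarDeviation μ p u c)) := by
  have h_dev := measurable_outerDeviation p hu c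
  have h_cutoff : Measurable fun q : E × E ↦ energyDensity p cutoff q.1 q.2 :=
    measurable_energyDensity p (by fun_prop)
  calc energyOn μ p (shiftedCompetitor u c z) (pairsMeeting (ball 0 1))
      ≤ ∫⁻ q, 2 ^ (p - 1) * (2 ^ (2 * finrank ℝ E)
          * collarPairs.indicator (fun q ↦ energyDensity p u q.1 q.2) (deform z q.1, deform z q.2)
        + energyDensity p cutoff q.1 q.2
          * (outerDeviation p u c (deform z q.1) + outerDeviation p u c (deform z q.2)))
        ∂μ.prod μ :=
        (setLIntegral_mono' (measurableSet_pairsMeeting measurableSet_ball) fun q hq ↦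
          energyDensity_shiftedCompetitor_le hp u c hz hq).trans (setLIntegral_le_lintegral _ _)
    _ ≤ _ := by
        rw [lintegral_const_mul' _ _ (by finiteness), lintegral_add_right _ (by fun_prop),
          lintegral_const_mul' _ _ (by finiteness),
          (by ring : 4 * finrank ℝ E = 2 * finrank ℝ E + 2 * finrank ℝ E), pow_add,
          mul_assoc (2 ^ _)]
        gcongr
        · exact setLIntegral_indicator_collarPairs_deform_le μ p hu hz
        · exact lintegral_energyDensity_cutoff_mul_outerDeviation_add_le μ p hu c hz hC

end Competitor

section CollarValue

variable {E F : Type*} [NormedAddCommGroup E] [NormedSpace ℝ E] [NormedAddCommGroup F]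

lemma farWeight_le_critKernel (x : E) {z : E} (hz : ‖z‖ ≤ 1) : farWeight x ≤ critKernel x z := by
  unfold farWeight critKernel
  gcongr
  rw [add_comm]
  exact enorm_sub_le.trans (by gcongr; simpa [← ofReal_norm] using hz)

variable [MeasurableSpace E]

lemma measure_ball_diff_ball_ne_zero [Nontrivial E] (μ : Measure E) [μ.IsOpenPosMeasure] :
    μ (ball 0 1 \ ball 0 (1 / 4)) ≠ 0 := by
  obtain ⟨x, hx⟩ := exists_norm_eq E (c := 1 / 2) (by norm_num)
  have h_open : IsOpen (ball (0 : E) 1 \ closedBall 0 (1 / 4)) :=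
    isOpen_ball.sdiff isClosed_closedBall
  refine ((h_open.measure_pos μ ⟨x, ?_⟩).trans_le
    (measure_mono (sdiff_subset_sdiff_right ball_subset_closedBall))).ne'
  rw [Set.mem_sdiff, mem_ball_zero_iff, mem_closedBall_zero_iff, hx]
  norm_num

variable [BorelSpace E]

lemma collarDeviation_eq_setLIntegral (μ : Measure E) (p : ℝ) (u : E → F) (c : F) :
    collarDeviation μ p u c = ∫⁻ x in (ball 0 (1 / 4))ᶜ, ‖u x - c‖ₑ ^ p * farWeight x ∂μ := by
  rw [collarDeviation, ← lintegral_indicator measurableSet_ball.compl]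
  simp only [outerDeviation, indicator_mul_left]

variable [FiniteDimensional ℝ E] [MeasurableSpace F] [BorelSpace F]
  [SecondCountableTopology F] (μ : Measure E) [μ.IsAddHaarMeasure] (p : ℝ) {u : E → F}

lemma setLIntegral_collarDeviation_le (hu : Measurable u) :
    ∫⁻ z in ball 0 1 \ ball 0 (1 / 4), collarDeviation μ p u (u z) ∂μ
      ≤ energyOn μ p u collarPairs := by
  have h_meas : Measurable fun q : E × E ↦ energyDensity p u q.1 q.2 :=
    measurable_energyDensity p hu
  calc ∫⁻ z in ball 0 1 \ ball 0 (1 / 4), collarDeviation μ p u (u z) ∂μ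
      ≤ ∫⁻ z in ball 0 1 \ ball 0 (1 / 4),
          ∫⁻ x in (ball 0 (1 / 4))ᶜ, energyDensity p u x z ∂μ ∂μ := by
        refine setLIntegral_mono' (measurableSet_ball.diff measurableSet_ball) fun z hz ↦ ?_
        rw [collarDeviation_eq_setLIntegral]
        refine lintegral_mono fun x ↦ ?_
        rw [energyDensity]
        gcongr
        exact farWeight_le_critKernel x (mem_ball_zero_iff.1 hz.1).le
    _ = energyOn μ p u ((ball 0 (1 / 4))ᶜ ×ˢ (ball 0 1 \ ball 0 (1 / 4))) := by
        rw [energyOn, ← Measure.prod_restrict, lintegral_prod_symm _ h_meas.aemeasurable]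
    _ ≤ energyOn μ p u collarPairs :=
        energyOn_mono μ p u (prod_subset_collarPairs subset_rfl (fun _ h ↦ h.2) sdiff_subset)

lemma exists_collarDeviation_le [Nontrivial E] (hu : Measurable u) :
    ∃ z₀, collarDeviation μ p u (u z₀)
      ≤ (μ (ball 0 1 \ ball 0 (1 / 4)))⁻¹ * energyOn μ p u collarPairs := by
  have h_meas : Measurable fun z ↦ collarDeviation μ p u (u z) := by
    simp only [collarDeviation_eq_setLIntegral]
    exact Measurable.lintegral_prod_right'
      (f := fun q : E × E ↦ ‖u q.2 - u q.1‖ₑ ^ p * farWeight q.2) (by fun_prop)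
  obtain ⟨z₀, -, hz₀⟩ := exists_le_setLAverage (measure_ball_diff_ball_ne_zero μ)
    ((measure_mono sdiff_subset).trans_lt measure_ball_lt_top).ne h_meas.aemeasurable
  refine ⟨z₀, hz₀.trans ?_⟩
  rw [setLAverage_eq, ENNReal.div_eq_inv_mul]
  gcongr
  exact setLIntegral_collarDeviation_le μ p hu

end CollarValue

section Normalize

open NormedSpace (normalize)

variable {F : Type*} [NormedAddCommGroup F] [NormedSpace ℝ F]

lemma norm_normalize_sub_normalize_le {x y : F} (hx : x ≠ 0) (hy : y ≠ 0) :
    ‖normalize x - normalize y‖ ≤ 2 * ‖x - y‖ / ‖x‖ := by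
  have hx' : 0 < ‖x‖ := norm_pos_iff.2 hx
  have h_eq : ‖x‖ • (normalize x - normalize y)
      = (x - y) + (‖y‖ - ‖x‖) • normalize y := by
    rw [smul_sub, sub_smul, NormedSpace.norm_smul_normalize, NormedSpace.norm_smul_normalize]
    abel
  rw [le_div_iff₀' hx']
  calc ‖x‖ * ‖normalize x - normalize y‖ = ‖(x - y) + (‖y‖ - ‖x‖) • normalize y‖ := by
        rw [← h_eq, norm_smul, norm_norm]
    _ ≤ ‖x - y‖ + |‖y‖ - ‖x‖| := by
        refine (norm_add_le _ _).trans_eq ?_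
        rw [norm_smul, NormedSpace.norm_normalize hy, mul_one, Real.norm_eq_abs]
    _ ≤ ‖x - y‖ + ‖x - y‖ := by
        gcongr
        exact norm_sub_rev x y ▸ abs_norm_sub_norm_le y x
    _ = 2 * ‖x - y‖ := (two_mul _).symm

lemma enorm_normalize_sub_normalize_le {x y : F} (hx : 1 / 2 ≤ ‖x‖) (hy : 1 / 2 ≤ ‖y‖) :
    ‖normalize x - normalize y‖ₑ ≤ 4 * ‖x - y‖ₑ := by
  have hx₀ : 0 < ‖x‖ := one_half_pos.trans_le hx
  have hy₀ : 0 < ‖y‖ := one_half_pos.trans_le hy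
  have h_norm : ‖normalize x - normalize y‖ ≤ 4 * ‖x - y‖ := by
    refine (norm_normalize_sub_normalize_le (norm_pos_iff.1 hx₀) (norm_pos_iff.1 hy₀)).trans ?_
    rw [div_le_iff₀ hx₀]
    nlinarith [norm_nonneg (x - y)]
  have h := ENNReal.ofReal_le_ofReal h_norm
  rwa [ENNReal.ofReal_mul zero_le_four, ENNReal.ofReal_ofNat, ofReal_norm, ofReal_norm] at h

lemma energyOn_normalize_le {E : Type*} [NormedAddCommGroup E] [NormedSpace ℝ E]
    [MeasurableSpace E] (μ : Measure E) {p : ℝ} (hp : 0 ≤ p) {w : E → F}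
    (hw : ∀ x, 1 / 2 ≤ ‖w x‖) (S : Set (E × E)) :
    energyOn μ p (fun x ↦ normalize (w x)) S ≤ 4 ^ p * energyOn μ p w S := by
  rw [energyOn, energyOn, ← lintegral_const_mul' _ _ (by finiteness)]
  refine lintegral_mono fun q ↦ ?_
  rw [energyDensity, energyDensity, ← mul_assoc, ← ENNReal.mul_rpow_of_nonneg _ _ hp]
  gcongr
  exact enorm_normalize_sub_normalize_le (hw q.1) (hw q.2)

end Normalize

section AveragedCompetitor

variable {E F : Type*} [NormedAddCommGroup E] [NormedSpace ℝ E] [MeasurableSpace E]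
  [NormedAddCommGroup F] {u : E → F}

section Integrability

variable [FiniteDimensional ℝ E] [BorelSpace E]

@[fun_prop]
lemma measurable_uncurry_deform : Measurable (Function.uncurry (deform : E → E → E)) := by
  unfold Function.uncurry deform rescale averagingRadius; fun_prop

variable [MeasurableSpace F] [BorelSpace F] [SecondCountableTopology F]

lemma integrable_comp_deform (μ : Measure E) [μ.IsAddHaarMeasure]
    (hu : Measurable u) {B : ℝ} (hB : ∀ x, ‖u x‖ ≤ B) (x : E) :
    Integrable (fun z ↦ u (deform z x)) μ[|closedBall 0 1] := by
  have := isProbabilityMeasure_cond_closedBall μ (0 : E) one_pos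
  refine .of_bound (hu.comp ?_).aestronglyMeasurable B (ae_of_all _ fun z ↦ hB _)
  unfold deform; fun_prop

variable [NormedSpace ℝ F]

lemma measurable_uncurry_shiftedCompetitor (hu : Measurable u) (c : F) :
    Measurable (Function.uncurry (shiftedCompetitor u c)) := by
  have : Measurable fun q : E × E ↦ u (deform q.1 q.2) :=
    hu.comp measurable_uncurry_deform
  unfold Function.uncurry shiftedCompetitor
  fun_prop

end Integrability

variable [NormedSpace ℝ F] (μ : Measure E)

/-- The interpolation between the constant `c` near the centre of the unit ball and the
mollification of `u` with variable radius `averagingRadius`, which equals `u` outside the ball. -/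
def competitor (u : E → F) (c : F) (x : E) : F :=
  ∫ z, shiftedCompetitor u c z x ∂μ[|closedBall 0 1]

variable [FiniteDimensional ℝ E]

lemma measurable_competitor [BorelSpace E] [MeasurableSpace F] [BorelSpace F]
    [SecondCountableTopology F] (hu : Measurable u) (c : F) : Measurable (competitor μ u c) :=
  (measurable_uncurry_shiftedCompetitor hu c).stronglyMeasurable.integral_prod_left.measurable

variable [μ.IsAddHaarMeasure]

lemma competitor_of_one_le_norm [CompleteSpace F] (u : E → F) (c : F) {x : E} (hx : 1 ≤ ‖x‖) :
    competitor μ u c x = u x := by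
  have := isProbabilityMeasure_cond_closedBall μ (0 : E) one_pos
  have h_const (z : E) : shiftedCompetitor u c z x = u x := by
    rw [shiftedCompetitor, deform_of_one_le_norm z hx, cutoff_eq_one (by linarith), one_smul,
      add_sub_cancel]
  simp [competitor, h_const]

variable [BorelSpace E] [MeasurableSpace F] [BorelSpace F] [SecondCountableTopology F]

lemma integrable_shiftedCompetitor (hu : Measurable u) {B : ℝ} (hB : ∀ x, ‖u x‖ ≤ B) (c : F)
    (x : E) : Integrable (fun z ↦ shiftedCompetitor u c z x) μ[|closedBall 0 1] := by
  have := isProbabilityMeasure_cond_closedBall μ (0 : E) one_pos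
  exact (integrable_const c).add
    (((integrable_comp_deform μ hu hB x).sub (integrable_const c)).smul (cutoff x))

lemma energyOn_competitor_le {p : ℝ} (hp : 1 ≤ p) (hu : Measurable u) {B : ℝ}
    (hB : ∀ x, ‖u x‖ ≤ B) (c : F) {C : ℝ≥0∞}
    (hC : ∀ y, ∫⁻ x, energyDensity p cutoff x y ∂μ ≤ C * farWeight y) :
    energyOn μ p (competitor μ u c) (pairsMeeting (ball 0 1))
      ≤ 2 ^ (p - 1) * (2 ^ (4 * finrank ℝ E) * energyOn μ p u collarPairs
        + 2 * (C * 2 ^ (3 * finrank ℝ E) * collarDeviation μ p u c)) := by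
  have := isProbabilityMeasure_cond_closedBall μ (0 : E) one_pos
  refine energyOn_integral_le μ hp (measurable_uncurry_shiftedCompetitor hu c)
    (integrable_shiftedCompetitor μ hu hB c) _ ?_
  filter_upwards [ae_cond_mem measurableSet_closedBall] with z hz
  exact energyOn_shiftedCompetitor_le μ hp hu c (mem_closedBall_zero_iff.1 hz) hC

variable [CompleteSpace F]

lemma competitor_of_norm_lt_one (hu : Measurable u) {B : ℝ} (hB : ∀ x, ‖u x‖ ≤ B) (c : F) {x : E}
    (hx : ‖x‖ < 1) :
    competitor μ u c x = c + cutoff x • (ballAverage μ u x (averagingRadius x) - c) := by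
  have := isProbabilityMeasure_cond_closedBall μ (0 : E) one_pos
  have h_radius : 0 < averagingRadius x := by
    rw [averagingRadius_of_norm_le_one hx.le]; linarith
  have h_int := integrable_comp_deform μ hu hB x
  have h_sub : Integrable (fun z ↦ u (deform z x) - c) μ[|closedBall 0 1] :=
    h_int.sub (integrable_const c)
  simp only [competitor, shiftedCompetitor]
  rw [integral_add (integrable_const c) (h_sub.fun_smul (cutoff x)), integral_smul,
    integral_sub h_int (integrable_const c),
    ← integral_rescale_cond_closedBall μ hu x h_radius]
  simp [deform]

lemma ofReal_one_sub_norm_ballAverage_rpow_le_energyOn {p : ℝ} (hp : 1 ≤ p) (hu : Measurable u)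
    (hu₁ : ∀ x, ‖u x‖ = 1) (x : E) {r : ℝ} (hr : 0 < r) :
    ENNReal.ofReal (1 - ‖ballAverage μ u x r‖) ^ p
      ≤ (μ (closedBall 0 1))⁻¹ ^ 2 * 2 ^ (2 * finrank ℝ E)
        * energyOn μ p u (closedBall x r ×ˢ closedBall x r) := by
  have h_scale : (μ (closedBall x r))⁻¹ * (μ (closedBall x r))⁻¹
        * ENNReal.ofReal (2 * r) ^ (2 * finrank ℝ E)
      = (μ (closedBall 0 1))⁻¹ ^ 2 * 2 ^ (2 * finrank ℝ E) := by
    rw [Measure.addHaar_closedBall' μ x hr.le, ENNReal.ofReal_mul zero_le_two,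
      ENNReal.ofReal_pow hr.le, ENNReal.ofReal_ofNat,
      ENNReal.mul_inv (Or.inl (by simp [hr])) (Or.inl (by finiteness)), mul_pow]
    calc _ = (μ (closedBall 0 1))⁻¹ ^ 2 * 2 ^ (2 * finrank ℝ E)
          * ((ENNReal.ofReal r ^ finrank ℝ E)⁻¹ * ENNReal.ofReal r ^ finrank ℝ E) ^ 2 := by ring
      _ = _ := by
        rw [ENNReal.inv_mul_cancel (by simp [hr]) (by finiteness), one_pow, mul_one]
  rw [← h_scale]
  refine (ofReal_one_sub_norm_ballAverage_rpow_le μ hp hu hu₁ x hr).trans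
    (lintegral_cond_lintegral_cond_le_energyOn μ p hu measurableSet_closedBall
      measurableSet_closedBall (by positivity) fun a ha b hb ↦ ?_)
  rw [← dist_eq_norm, two_mul]
  exact (dist_triangle_right a b x).trans (add_le_add ha hb)

lemma enorm_ballAverage_sub_rpow_le_collarDeviation {p : ℝ} (hp : 1 ≤ p) (hu : Measurable u)
    {B : ℝ} (hB : ∀ x, ‖u x‖ ≤ B) (c : F) {x : E} {r : ℝ} (hr : 0 < r)
    (h₁ : closedBall x r ⊆ ball 0 1) (h₂ : closedBall x r ⊆ (ball 0 (1 / 4))ᶜ) :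
    ‖ballAverage μ u x r - c‖ₑ ^ p
      ≤ (μ (closedBall 0 r))⁻¹ * (2 ^ (2 * finrank ℝ E) * collarDeviation μ p u c) := by
  have h_weight : ∀ y ∈ closedBall x r, 1 ≤ 2 ^ (2 * finrank ℝ E) * farWeight y := fun y hy ↦ by
    have h_enorm : ‖y‖ₑ ≤ 1 := by
      simpa [← ofReal_norm] using (mem_ball_zero_iff.1 (h₁ hy)).le
    have h_two : 1 + ‖y‖ₑ ≤ 2 * 1 := by
      rw [mul_one, ← one_add_one_eq_two]
      gcongr
    simpa [farWeight] using inv_pow_le_mul_inv_pow (by simp) (by simp) h_two (2 * finrank ℝ E)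
  refine (enorm_ballAverage_sub_rpow_le μ hp hu hB x hr c).trans ?_
  rw [ProbabilityTheory.cond, lintegral_smul_measure, smul_eq_mul,
    Measure.addHaar_closedBall_center, collarDeviation_eq_setLIntegral,
    ← lintegral_const_mul (2 ^ _) (by fun_prop)]
  gcongr 1
  refine (setLIntegral_mono' measurableSet_closedBall fun y hy ↦ ?_).trans (lintegral_mono_set h₂)
  rw [mul_left_comm]
  exact le_mul_of_one_le_right' (h_weight y hy)

lemma enorm_ballAverage_averagingRadius_sub_rpow_le {p : ℝ} (hp : 1 ≤ p) (hu : Measurable u)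
    {B : ℝ} (hB : ∀ x, ‖u x‖ ≤ B) (c : F) {x : E} (hx : 1 / 2 ≤ ‖x‖) (hx₁ : ‖x‖ ≤ 3 / 4) :
    ‖ballAverage μ u x (averagingRadius x) - c‖ₑ ^ p
      ≤ (μ (closedBall 0 (1 / 16)))⁻¹ * (2 ^ (2 * finrank ℝ E) * collarDeviation μ p u c) := by
  have h_radius : 1 / 16 ≤ averagingRadius x := by
    rw [averagingRadius_of_norm_le_one (by linarith)]; linarith
  refine (enorm_ballAverage_sub_rpow_le_collarDeviation μ hp hu hB c (by linarith)
    (closedBall_averagingRadius_subset_ball (by linarith))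
    (closedBall_averagingRadius_subset_compl_ball hx)).trans ?_
  gcongr

lemma half_le_norm_competitor {p : ℝ} (hp : 1 ≤ p) (hu : Measurable u) (hu₁ : ∀ x, ‖u x‖ = 1)
    {c : F} (hc : ‖c‖ = 1)
    (h_sphere : (μ (closedBall 0 1))⁻¹ ^ 2 * 2 ^ (2 * finrank ℝ E) * energyOn μ p u collarPairs
      ≤ 2⁻¹ ^ p)
    (h_centre : (μ (closedBall 0 (1 / 16)))⁻¹
      * (2 ^ (2 * finrank ℝ E) * collarDeviation μ p u c) ≤ 2⁻¹ ^ p) (x : E) :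
    1 / 2 ≤ ‖competitor μ u c x‖ := by
  have hp₀ : 0 < p := by linarith
  have h_two : (2⁻¹ : ℝ≥0∞) = ENNReal.ofReal (1 / 2) := by
    rw [one_div, ENNReal.ofReal_inv_of_pos two_pos, ENNReal.ofReal_ofNat]
  have h_root {a : ℝ} (h : ENNReal.ofReal a ^ p ≤ 2⁻¹ ^ p) : a ≤ 1 / 2 := by
    rwa [ENNReal.rpow_le_rpow_iff hp₀, h_two, ENNReal.ofReal_le_ofReal_iff (by norm_num)] at h
  rcases le_or_gt 1 ‖x‖ with hx | hx
  · rw [competitor_of_one_le_norm μ u c hx, hu₁]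
    norm_num
  rw [competitor_of_norm_lt_one μ hu (fun y ↦ (hu₁ y).le) c hx]
  rcases le_total (3 / 4) ‖x‖ with hx' | hx'
  · have h_radius : 0 < averagingRadius x := by
      rw [averagingRadius_of_norm_le_one hx.le]; linarith
    have h_avg : 1 - ‖ballAverage μ u x (averagingRadius x)‖ ≤ 1 / 2 := by
      refine h_root (((ofReal_one_sub_norm_ballAverage_rpow_le_energyOn μ hp hu hu₁ x
        h_radius).trans ?_).trans h_sphere)
      gcongr
      exact energyOn_mono μ p u
        (closedBall_prod_closedBall_averagingRadius_subset_collarPairs (by linarith) hx)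
    rw [cutoff_eq_one hx', one_smul, add_sub_cancel]
    linarith
  rcases le_total ‖x‖ (1 / 2) with hx'' | hx''
  · rw [cutoff_eq_zero hx'', zero_smul, add_zero, hc]
    norm_num
  · have h_avg : ‖ballAverage μ u x (averagingRadius x) - c‖ ≤ 1 / 2 := by
      refine h_root ?_
      rw [ofReal_norm]
      exact (enorm_ballAverage_averagingRadius_sub_rpow_le μ hp hu (fun y ↦ (hu₁ y).le) c hx''
        hx').trans h_centre
    have h_smul : ‖cutoff x • (ballAverage μ u x (averagingRadius x) - c)‖ ≤ 1 / 2 := by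
      rw [norm_smul, Real.norm_of_nonneg (cutoff_nonneg x)]
      exact (mul_le_of_le_one_left (norm_nonneg _) (cutoff_le_one x)).trans h_avg
    linarith [norm_sub_le_norm_add c
      (cutoff x • (ballAverage μ u x (averagingRadius x) - c))]

lemma exists_half_le_norm_competitor_and_energyOn_le [Nontrivial E] {p : ℝ}
    (hp : finrank ℝ E < p) :
    ∃ C : ℝ≥0∞, C ≠ ⊤ ∧ ∀ u : E → F, Measurable u → (∀ x, ‖u x‖ = 1) →
      C * energyOn μ p u collarPairs ≤ 2⁻¹ ^ p → ∃ c : F, (∀ x, 1 / 2 ≤ ‖competitor μ u c x‖) ∧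
        energyOn μ p (competitor μ u c) (pairsMeeting (ball 0 1))
          ≤ C * energyOn μ p u collarPairs := by
  have hp₁ : 1 ≤ p := (Nat.one_le_cast.2 Module.finrank_pos).trans hp.le
  obtain ⟨K, hK, hK_far⟩ := exists_lintegral_energyDensity_cutoff_le μ hp
  have h_annulus := measure_ball_diff_ball_ne_zero μ
  have h_ball {r : ℝ} (hr : 0 < r) : μ (closedBall 0 r) ≠ 0 := (measure_closedBall_pos μ 0 hr).ne'
  set a := (μ (ball 0 1 \ ball 0 (1 / 4)))⁻¹
  set C₁ := (μ (closedBall 0 1))⁻¹ ^ 2 * 2 ^ (2 * finrank ℝ E)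
  set C₂ := (μ (closedBall 0 (1 / 16)))⁻¹ * (2 ^ (2 * finrank ℝ E) * a) with hC₂
  set C₃ := 2 ^ (p - 1) * (2 ^ (4 * finrank ℝ E) + 2 * (K * 2 ^ (3 * finrank ℝ E) * a)) with hC₃
  refine ⟨C₁ + C₂ + C₃, ?_, fun u hu hu₁ h_small ↦ ?_⟩
  · have h₁ := h_ball one_pos
    have h₂ := h_ball (r := 1 / 16) (by norm_num)
    finiteness
  have h_le {C' : ℝ≥0∞} (h : C' ≤ C₁ + C₂ + C₃) :
      C' * energyOn μ p u collarPairs ≤ (C₁ + C₂ + C₃) * energyOn μ p u collarPairs := by gcongr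
  obtain ⟨z₀, hz₀⟩ := exists_collarDeviation_le μ p hu
  refine ⟨u z₀, half_le_norm_competitor μ hp₁ hu hu₁ (hu₁ z₀)
    ((h_le (le_self_add.trans le_self_add)).trans h_small) ?_, le_trans ?_ (h_le le_add_self)⟩
  · refine le_trans ?_ ((h_le (le_add_self.trans le_self_add)).trans h_small)
    rw [hC₂, mul_assoc, mul_assoc]
    gcongr
  · calc energyOn μ p (competitor μ u (u z₀)) (pairsMeeting (ball 0 1))
        ≤ 2 ^ (p - 1) * (2 ^ (4 * finrank ℝ E) * energyOn μ p u collarPairs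
          + 2 * (K * 2 ^ (3 * finrank ℝ E) * (a * energyOn μ p u collarPairs))) := by
          refine (energyOn_competitor_le μ hp₁ hu (fun x ↦ (hu₁ x).le) _ hK_far).trans ?_
          gcongr
      _ = C₃ * energyOn μ p u collarPairs := by rw [hC₃]; ring

lemma exists_competitor [Nontrivial E] {p : ℝ} (hp : finrank ℝ E < p) :
    ∃ C : ℝ≥0∞, C ≠ ⊤ ∧ ∀ u : E → F, Measurable u → (∀ x, ‖u x‖ = 1) →
      C * energyOn μ p u collarPairs ≤ 2⁻¹ ^ p → ∃ v : E → F, Measurable v ∧ (∀ x, ‖v x‖ = 1) ∧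
        EqOn v u (ball 0 1)ᶜ ∧
        energyOn μ p v (pairsMeeting (ball 0 1)) ≤ C * energyOn μ p u collarPairs := by
  have hp₀ : 0 < p := (Nat.cast_nonneg _).trans_lt hp
  obtain ⟨C, hC, h_exists⟩ := exists_half_le_norm_competitor_and_energyOn_le (F := F) μ hp
  have h_one : (1 : ℝ≥0∞) ≤ 4 ^ p := ENNReal.one_le_rpow (by norm_num) hp₀
  refine ⟨4 ^ p * C, by finiteness, fun u hu hu₁ h_small ↦ ?_⟩
  obtain ⟨c, h_half, h_energy⟩ := h_exists u hu hu₁ <|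
    h_small.trans' (by gcongr; exact le_mul_of_one_le_left' h_one)
  refine ⟨fun x ↦ NormedSpace.normalize (competitor μ u c x), ?_, fun x ↦ ?_, fun x hx ↦ ?_, ?_⟩
  · have h_meas := measurable_competitor μ hu c
    unfold NormedSpace.normalize
    fun_prop
  · exact NormedSpace.norm_normalize (norm_pos_iff.1 (one_half_pos.trans_le (h_half x)))
  · rw [mem_compl_iff, mem_ball_zero_iff, not_lt] at hx
    beta_reduce
    rw [competitor_of_one_le_norm μ u c hx, NormedSpace.normalize_eq_self_of_norm_eq_one (hu₁ x)]
  · rw [mul_assoc]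
    exact (energyOn_normalize_le μ hp₀.le h_half _).trans (by gcongr)

end AveragedCompetitor

section Decay

lemma le_div_add_one_mul_of_add_le_mul {b m C : ℝ≥0∞} (hC : C ≠ ⊤) (h : b + m ≤ C * m) :
    b ≤ C / (C + 1) * (b + m) := by
  have h_top : C + 1 ≠ ⊤ := by finiteness
  rw [ENNReal.mul_comm_div, ← mul_div_assoc, ENNReal.le_div_iff_mul_le (by simp) (by simp [h_top])]
  calc b * (C + 1) = C * b + b := by ring
    _ ≤ C * b + C * m := by gcongr; exact le_self_add.trans h
    _ = C * (b + m) := by ring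

variable {E F : Type*} [NormedAddCommGroup E] [NormedSpace ℝ E] [FiniteDimensional ℝ E]
  [MeasurableSpace E] [BorelSpace E] [NormedAddCommGroup F] [MeasurableSpace F] [BorelSpace F]
  [SecondCountableTopology F] (μ : Measure E) [μ.IsAddHaarMeasure]

lemma eventually_measure_ball_lt [Nontrivial E] {δ : ℝ≥0∞} (hδ : 0 < δ) :
    ∀ᶠ r in 𝓝[>] (0 : ℝ), ∀ x : E, μ (ball x r) < δ := by
  have h_tendsto : Tendsto (fun r : ℝ ↦ ENNReal.ofReal (r ^ finrank ℝ E) * μ (ball 0 1))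
      (𝓝[>] 0) (𝓝 0) := by
    have h_pow : Tendsto (fun r : ℝ ↦ ENNReal.ofReal (r ^ finrank ℝ E)) (𝓝 0) (𝓝 0) := by
      simpa [Function.comp_def, Module.finrank_pos.ne'] using
        (ENNReal.continuous_ofReal.comp (continuous_pow (finrank ℝ E))).tendsto (0 : ℝ)
    simpa using (ENNReal.Tendsto.mul_const h_pow (Or.inr measure_ball_lt_top.ne)).mono_left
      nhdsWithin_le_nhds
  filter_upwards [h_tendsto.eventually_lt_const hδ, self_mem_nhdsWithin] with r hr hr₀ x
  rwa [Measure.addHaar_ball μ x (mem_Ioi.1 hr₀).le]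

lemma exists_energyOn_pairsMeeting_le_of_measure_lt {p : ℝ} {u : E → F} (hu : Measurable u)
    (hu_energy : energyOn μ p u univ ≠ ⊤) {ε : ℝ≥0∞} (hε : ε ≠ 0) :
    ∃ δ > 0, ∀ B : Set E, μ B < δ → energyOn μ p u (pairsMeeting B) ≤ ε := by
  have h_meas := measurable_energyDensity p hu
  have h_fubini : ∫⁻ x, ∫⁻ y, energyDensity p u x y ∂μ ∂μ = energyOn μ p u univ := by
    rw [energyOn, Measure.restrict_univ, lintegral_prod _ h_meas.aemeasurable]
  obtain ⟨δ, hδ, h_small⟩ := exists_pos_setLIntegral_lt_of_measure_lt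
    (h_fubini.trans_ne hu_energy) (ENNReal.half_pos hε).ne'
  refine ⟨δ, hδ, fun B hB ↦ ?_⟩
  have h_fst : energyOn μ p u (B ×ˢ univ) ≤ ε / 2 := by
    rw [energyOn, ← Measure.prod_restrict, Measure.restrict_univ,
      lintegral_prod _ h_meas.aemeasurable]
    exact (h_small B hB).le
  have h_snd : energyOn μ p u (univ ×ˢ B) ≤ ε / 2 := by
    rw [energyOn, ← Measure.prod_restrict, Measure.restrict_univ,
      lintegral_prod_symm _ h_meas.aemeasurable]
    simpa only [energyDensity_comm p u] using (h_small B hB).le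
  have h_union : pairsMeeting B = B ×ˢ univ ∪ univ ×ˢ B := by
    ext q
    simp [mem_pairsMeeting]
  calc energyOn μ p u (pairsMeeting B)
      ≤ energyOn μ p u (B ×ˢ univ) + energyOn μ p u (univ ×ˢ B) := by
        rw [h_union]
        exact lintegral_union_le _ _ _
    _ ≤ ε / 2 + ε / 2 := add_le_add h_fst h_snd
    _ = ε := ENNReal.add_halves ε

variable [NormedSpace ℝ F] [CompleteSpace F]

lemma exists_energyOn_pairsMeeting_ball_quarter_le [Nontrivial E] {p : ℝ}
    (hp : finrank ℝ E < p) :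
    ∃ ε : ℝ≥0∞, ε ≠ 0 ∧ ∃ θ : ℝ≥0∞, θ < 1 ∧ ∀ (u : E → F) (x : E) (R : ℝ), 0 < R →
      IsMinimizingHarmonic μ p u (ball x R) → energyOn μ p u (pairsMeeting (ball x R)) ≤ ε →
        energyOn μ p u (pairsMeeting (ball x (R * (1 / 4))))
          ≤ θ * energyOn μ p u (pairsMeeting (ball x R)) := by
  obtain ⟨C, hC, h_comp⟩ := exists_competitor (F := F) μ hp
  refine ⟨2⁻¹ ^ p / C, ENNReal.div_ne_zero.2 ⟨by simp, hC⟩, C / (C + 1),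
    ENNReal.div_lt_of_lt_mul ?_, fun u x R hR hu h_small ↦ ?_⟩
  · rw [one_mul]
    exact ENNReal.lt_add_right hC one_ne_zero
  have h_scale (r : ℝ) : energyOn μ p (u ∘ rescale x R) (pairsMeeting (ball 0 r))
      = energyOn μ p u (pairsMeeting (ball x (R * r))) := by
    rw [← rescale_preimage_pairsMeeting_ball x hR, energyOn_comp_rescale μ p hu.measurable x hR
      (measurableSet_pairsMeeting measurableSet_ball)]
  have h_one := h_scale 1
  rw [mul_one] at h_one
  have h_split := energyOn_pairsMeeting_eq_add_collarPairs μ p (u ∘ rescale x R)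
  have hw := hu.comp_rescale hR
  obtain ⟨v, hv, hv₁, hvu, hv_le⟩ := h_comp _ hw.measurable hw.norm_eq_one <|
    calc C * energyOn μ p (u ∘ rescale x R) collarPairs
        ≤ C * (2⁻¹ ^ p / C) := by
          gcongr
          exact (energyOn_mono μ p _ sdiff_subset).trans (h_one.trans_le h_small)
      _ ≤ 2⁻¹ ^ p := ENNReal.mul_div_le
  rw [← h_scale, ← h_one, h_split]
  refine le_div_add_one_mul_of_add_le_mul hC ?_
  rw [← h_split]
  exact (hw.energyOn_pairsMeeting_le measurableSet_ball hv hv₁ hvu).trans hv_le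

lemma exists_energyOn_pairsMeeting_ball_le_pow_mul [Nontrivial E] {p : ℝ}
    (hp : finrank ℝ E < p) :
    ∃ ε : ℝ≥0∞, ε ≠ 0 ∧ ∃ θ : ℝ≥0∞, θ < 1 ∧ ∀ (u : E → F) (x : E) (R : ℝ), 0 < R →
      IsMinimizingHarmonic μ p u (ball x R) → energyOn μ p u (pairsMeeting (ball x R)) ≤ ε →
        ∀ j : ℕ, energyOn μ p u (pairsMeeting (ball x (R * (1 / 4) ^ j)))
          ≤ θ ^ j * energyOn μ p u (pairsMeeting (ball x R)) := by
  obtain ⟨ε, hε, θ, hθ, h_decay⟩ := exists_energyOn_pairsMeeting_ball_quarter_le (F := F) μ hp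
  refine ⟨ε, hε, θ, hθ, fun u x R hR hu h_small j ↦ ?_⟩
  induction j with
  | zero => simp
  | succ j ih =>
    have h_sub : ball x (R * (1 / 4) ^ j) ⊆ ball x R :=
      ball_subset_ball (mul_le_of_le_one_right hR.le (pow_le_one₀ (by norm_num) (by norm_num)))
    have h_step := h_decay u x (R * (1 / 4) ^ j) (by positivity) (hu.mono h_sub)
      ((energyOn_mono μ p u (pairsMeeting_mono h_sub)).trans h_small)
    rw [mul_assoc, ← pow_succ] at h_step
    calc energyOn μ p u (pairsMeeting (ball x (R * (1 / 4) ^ (j + 1))))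
        ≤ θ * energyOn μ p u (pairsMeeting (ball x (R * (1 / 4) ^ j))) := h_step
      _ ≤ θ * (θ ^ j * energyOn μ p u (pairsMeeting (ball x R))) := by gcongr
      _ = θ ^ (j + 1) * energyOn μ p u (pairsMeeting (ball x R)) := by rw [pow_succ']; ring

end Decay

section Campanato

lemma exists_holderOnWith_of_edist_le_geometric {X Y : Type*} [MetricSpace X]
    [PseudoEMetricSpace Y] {f : X → Y} {K : Set X} {α : ℝ≥0} {C : ℝ≥0∞} (hC : C ≠ ⊤) (k : ℕ)
    (h_bdd : ∀ x ∈ K, ∀ y ∈ K, edist (f x) (f y) ≤ C)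
    (h_near : ∀ x ∈ K, ∀ y ∈ K, ∀ j : ℕ, dist x y ≤ (1 / 4) ^ (k + j) →
      edist (f x) (f y) ≤ C * (4⁻¹ ^ (α : ℝ)) ^ j) :
    ∃ L : ℝ≥0, HolderOnWith L α f K := by
  have h_const : C * (4 ^ (k + 1)) ^ (α : ℝ) ≠ ⊤ := by finiteness
  refine ⟨(C * (4 ^ (k + 1)) ^ (α : ℝ)).toNNReal, fun x hx y hy ↦ ?_⟩
  rw [ENNReal.coe_toNNReal h_const, mul_assoc, ← ENNReal.mul_rpow_of_nonneg _ _ α.coe_nonneg]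
  rcases eq_or_ne x y with rfl | hxy
  · simp
  have h_dist : ENNReal.ofReal (4 ^ (k + 1) * dist x y) = 4 ^ (k + 1) * edist x y := by
    rw [ENNReal.ofReal_mul (by positivity), ENNReal.ofReal_pow (by norm_num), edist_dist,
      ENNReal.ofReal_ofNat]
  rw [← h_dist]
  rcases le_or_gt (4 ^ k * dist x y) 1 with h_le | h_lt
  · obtain ⟨j, hj, hj'⟩ := exists_nat_pow_near_of_lt_one
      (mul_pos (by positivity) (dist_pos.2 hxy)) h_le (by norm_num : (0 : ℝ) < 1 / 4) (by norm_num)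
    have h_scale : (1 / 4 : ℝ) ^ j ≤ 4 ^ (k + 1) * dist x y := by
      rw [pow_succ] at hj ⊢
      linarith
    calc edist (f x) (f y) ≤ C * (4⁻¹ ^ (α : ℝ)) ^ j := by
          refine h_near x hx y hy j ?_
          rwa [pow_add, one_div_pow 4 k, one_div_mul_eq_div, le_div_iff₀' (by positivity)]
      _ = C * ENNReal.ofReal ((1 / 4) ^ j) ^ (α : ℝ) := by
          rw [ENNReal.ofReal_pow (by norm_num), one_div, ENNReal.ofReal_inv_of_pos (by norm_num),
            ENNReal.ofReal_ofNat, ← ENNReal.rpow_mul_natCast, mul_comm (α : ℝ),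
            ENNReal.rpow_natCast_mul]
      _ ≤ C * ENNReal.ofReal (4 ^ (k + 1) * dist x y) ^ (α : ℝ) := by gcongr
  · have h_one : 1 ≤ ENNReal.ofReal (4 ^ (k + 1) * dist x y) := by
      rw [ENNReal.one_le_ofReal, pow_succ]
      linarith
    calc edist (f x) (f y) ≤ C * 1 := (h_bdd x hx y hy).trans_eq (mul_one C).symm
      _ ≤ C * ENNReal.ofReal (4 ^ (k + 1) * dist x y) ^ (α : ℝ) := by
          gcongr
          simpa using ENNReal.rpow_le_rpow h_one α.coe_nonneg

lemma exists_holderOnWith_of_tendsto_of_edist_le_geometric {X Y : Type*} [MetricSpace X]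
    [PseudoEMetricSpace Y] {g : ℕ → X → Y} {f : X → Y} {K : Set X} {α : ℝ≥0} (hα : 0 < α)
    {D B : ℝ≥0∞} (hD : D ≠ ⊤) (hB : B ≠ ⊤) (k : ℕ)
    (h_tendsto : ∀ x ∈ K, Tendsto (g · x) atTop (𝓝 (f x)))
    (h_succ : ∀ x ∈ K, ∀ j, edist (g j x) (g (j + 1) x) ≤ D * (4⁻¹ ^ (α : ℝ)) ^ j)
    (h_near : ∀ x ∈ K, ∀ y ∈ K, ∀ j, dist x y ≤ (1 / 4) ^ (k + j) →
      edist (g j x) (g j y) ≤ D * (4⁻¹ ^ (α : ℝ)) ^ j)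
    (h_bdd : ∀ x ∈ K, ∀ y ∈ K, edist (f x) (f y) ≤ B) :
    ∃ L : ℝ≥0, HolderOnWith L α f K := by
  set τ : ℝ≥0∞ := 4⁻¹ ^ (α : ℝ)
  have hτ : τ < 1 := ENNReal.rpow_lt_one (by simp) (by exact_mod_cast hα)
  have hτ' : 1 - τ ≠ 0 := (tsub_pos_of_lt hτ).ne'
  have h_tail (x) (hx : x ∈ K) (j : ℕ) : edist (g j x) (f x) ≤ D * τ ^ j / (1 - τ) :=
    edist_le_of_edist_le_geometric_of_tendsto τ D (h_succ x hx) (h_tendsto x hx) j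
  refine exists_holderOnWith_of_edist_le_geometric
    (C := D / (1 - τ) + D + D / (1 - τ) + B) (by finiteness) k
    (fun x hx y hy ↦ (h_bdd x hx y hy).trans le_add_self) fun x hx y hy j hxy ↦ ?_
  calc edist (f x) (f y)
      ≤ edist (f x) (g j x) + edist (g j x) (g j y) + edist (g j y) (f y) :=
        edist_triangle4 _ _ _ _
    _ ≤ D * τ ^ j / (1 - τ) + D * τ ^ j + D * τ ^ j / (1 - τ) := by
        rw [edist_comm (f x)]
        exact add_le_add (add_le_add (h_tail x hx j) (h_near x hx y hy j hxy)) (h_tail y hy j)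
    _ = (D / (1 - τ) + D + D / (1 - τ)) * τ ^ j := by simp only [div_eq_mul_inv]; ring
    _ ≤ (D / (1 - τ) + D + D / (1 - τ) + B) * τ ^ j := mul_le_mul_left le_self_add _

lemma le_rpow_inv_mul_of_rpow_le {a b D : ℝ≥0∞} {p : ℝ} (hp : 0 < p) (h : a ^ p ≤ D * b ^ p) :
    a ≤ D ^ p⁻¹ * b := by
  rwa [← ENNReal.rpow_le_rpow_iff hp, ENNReal.mul_rpow_of_nonneg _ _ hp.le,
    ENNReal.rpow_inv_rpow hp.ne']

variable {E F : Type*} [NormedAddCommGroup E] [MeasurableSpace E] [NormedAddCommGroup F]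
  [NormedSpace ℝ F] (μ : Measure E)

/-- The precise representative of `u`: the limit of its averages over the balls of radius `4⁻ᵏ`.
Where these averages do not converge the value is arbitrary. -/
def preciseRep (u : E → F) (x : E) : F :=
  limUnder atTop fun k : ℕ ↦ ballAverage μ u x ((1 / 4) ^ k)

lemma tendsto_preciseRep_of_edist_le_geometric [CompleteSpace F] {u : E → F} {x : E} {k : ℕ}
    {D τ : ℝ≥0∞} (hD : D ≠ ⊤) (hτ : τ < 1)
    (h : ∀ j : ℕ, edist (ballAverage μ u x ((1 / 4) ^ (k + j)))
      (ballAverage μ u x ((1 / 4) ^ (k + (j + 1)))) ≤ D * τ ^ j) :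
    Tendsto (fun j : ℕ ↦ ballAverage μ u x ((1 / 4) ^ (k + j))) atTop (𝓝 (preciseRep μ u x)) := by
  obtain ⟨a, ha⟩ := cauchySeq_tendsto_of_complete (cauchySeq_of_edist_le_geometric τ D hτ hD h)
  have ha' : Tendsto (fun j : ℕ ↦ ballAverage μ u x ((1 / 4) ^ j)) atTop (𝓝 a) := by
    simp only [add_comm k] at ha
    exact (tendsto_add_atTop_iff_nat (f := fun j : ℕ ↦ ballAverage μ u x ((1 / 4) ^ j)) k).1 ha
  rwa [preciseRep, ha'.limUnder_eq]

variable [NormedSpace ℝ E] [FiniteDimensional ℝ E] [μ.IsAddHaarMeasure]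

lemma norm_ballAverage_le {u : E → F} {B : ℝ} (hB : ∀ x, ‖u x‖ ≤ B) (x : E) {r : ℝ} (hr : 0 < r) :
    ‖ballAverage μ u x r‖ ≤ B := by
  have := isProbabilityMeasure_cond_closedBall μ x hr
  simpa [ballAverage] using norm_integral_le_of_norm_le_const (μ := μ[|closedBall x r])
    (ae_of_all _ hB)

variable [BorelSpace E]

lemma inv_measure_closedBall_mul_le (x : E) {R r : ℝ} (hR : 0 < R) (hr : R * (1 / 16) ≤ r) :
    (μ (closedBall x r))⁻¹ * ENNReal.ofReal R ^ finrank ℝ E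
      ≤ (μ (closedBall 0 (1 / 16)))⁻¹ := by
  have h_le : ENNReal.ofReal R ^ finrank ℝ E * μ (closedBall 0 (1 / 16)) ≤ μ (closedBall x r) := by
    rw [← ENNReal.ofReal_pow hR.le, ← Measure.addHaar_closedBall_mul μ x hR.le (by norm_num)]
    exact measure_mono (closedBall_subset_closedBall hr)
  have h_ne_zero : ENNReal.ofReal R ^ finrank ℝ E ≠ 0 := by simp [hR]
  have h_ne_top : ENNReal.ofReal R ^ finrank ℝ E ≠ ⊤ := by finiteness
  calc (μ (closedBall x r))⁻¹ * ENNReal.ofReal R ^ finrank ℝ E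
      ≤ (ENNReal.ofReal R ^ finrank ℝ E * μ (closedBall 0 (1 / 16)))⁻¹
        * ENNReal.ofReal R ^ finrank ℝ E := by gcongr
    _ = (μ (closedBall 0 (1 / 16)))⁻¹ := by
        rw [ENNReal.mul_inv (Or.inl h_ne_zero) (Or.inl h_ne_top), mul_right_comm,
          ENNReal.inv_mul_cancel h_ne_zero h_ne_top, one_mul]

variable [CompleteSpace F]

lemma preciseRep_ae_eq {u : E → F} (hu : LocallyIntegrable u μ) :
    preciseRep μ u =ᵐ[μ] u := by
  have h_radii : Tendsto (fun k : ℕ ↦ (1 / 4 : ℝ) ^ k) atTop (𝓝[>] 0) :=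
    tendsto_pow_atTop_nhdsWithin_zero_of_lt_one (by norm_num) (by norm_num)
  filter_upwards [ae_tendsto_ballAverage μ hu] with x hx
  exact (hx.comp h_radii).limUnder_eq

variable [MeasurableSpace F] [BorelSpace F] [SecondCountableTopology F]

variable {p : ℝ} {u : E → F} {B : ℝ}

lemma enorm_ballAverage_sub_ballAverage_rpow_le_energyOn (hp : 1 ≤ p) (hu : Measurable u)
    (hB : ∀ x, ‖u x‖ ≤ B) {x y : E} {R r : ℝ} (hR : 0 < R) (hr : R * (1 / 16) ≤ r)
    (hr' : r ≤ R * (1 / 4)) (hxy : dist x y ≤ R * (1 / 4)) :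
    ‖ballAverage μ u x (R * (1 / 4)) - ballAverage μ u y r‖ₑ ^ p
      ≤ (μ (closedBall 0 (1 / 16)))⁻¹ ^ 2 * energyOn μ p u (pairsMeeting (ball x R)) := by
  have h_norm : ∀ a ∈ closedBall x (R * (1 / 4)), ∀ b ∈ closedBall y r, ‖a - b‖ ≤ R := by
    intro a ha b hb
    rw [mem_closedBall] at ha hb
    rw [← dist_eq_norm]
    linarith [dist_triangle4_right a b x y]
  have h_sub : closedBall x (R * (1 / 4)) ×ˢ closedBall y r ⊆ pairsMeeting (ball x R) :=
    fun q hq ↦ mem_pairsMeeting.2 (Or.inl (closedBall_subset_ball (by linarith) hq.1))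
  calc ‖ballAverage μ u x (R * (1 / 4)) - ballAverage μ u y r‖ₑ ^ p
      ≤ (μ (closedBall x (R * (1 / 4))))⁻¹ * (μ (closedBall y r))⁻¹
          * ENNReal.ofReal R ^ (2 * finrank ℝ E)
          * energyOn μ p u (closedBall x (R * (1 / 4)) ×ˢ closedBall y r) :=
        (enorm_ballAverage_sub_ballAverage_rpow_le μ hp hu hB x y (by positivity)
          (by linarith)).trans (lintegral_cond_lintegral_cond_le_energyOn μ p hu
            measurableSet_closedBall measurableSet_closedBall hR h_norm)
    _ = ((μ (closedBall x (R * (1 / 4))))⁻¹ * ENNReal.ofReal R ^ finrank ℝ E)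
          * ((μ (closedBall y r))⁻¹ * ENNReal.ofReal R ^ finrank ℝ E)
          * energyOn μ p u (closedBall x (R * (1 / 4)) ×ˢ closedBall y r) := by ring
    _ ≤ (μ (closedBall 0 (1 / 16)))⁻¹ * (μ (closedBall 0 (1 / 16)))⁻¹
          * energyOn μ p u (pairsMeeting (ball x R)) := by
        gcongr
        · exact inv_measure_closedBall_mul_le μ x hR (by linarith)
        · exact inv_measure_closedBall_mul_le μ y hR hr
        · exact energyOn_mono μ p u h_sub
    _ = _ := by ring

lemma edist_ballAverage_ballAverage_le (hp : 1 ≤ p) (hu : Measurable u) (hB : ∀ x, ‖u x‖ ≤ B)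
    {A t : ℝ≥0∞} {x y : E} {R r : ℝ} (hR : 0 < R) (hr : R * (1 / 16) ≤ r) (hr' : r ≤ R * (1 / 4))
    (hxy : dist x y ≤ R * (1 / 4)) (h : energyOn μ p u (pairsMeeting (ball x R)) ≤ A * t ^ p) :
    edist (ballAverage μ u x (R * (1 / 4))) (ballAverage μ u y r)
      ≤ ((μ (closedBall 0 (1 / 16)))⁻¹ ^ 2 * A) ^ p⁻¹ * t := by
  rw [edist_eq_enorm_sub]
  refine le_rpow_inv_mul_of_rpow_le (by linarith)
    ((enorm_ballAverage_sub_ballAverage_rpow_le_energyOn μ hp hu hB hR hr hr' hxy).trans ?_)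
  rw [mul_assoc]
  gcongr

lemma exists_holderOnWith_preciseRep (hp : 1 ≤ p) (hu : Measurable u) (hB : ∀ x, ‖u x‖ ≤ B)
    {K : Set E} {α : ℝ≥0} (hα : 0 < α) {A : ℝ≥0∞} (hA : A ≠ ⊤) {k : ℕ}
    (h : ∀ x ∈ K, ∀ j : ℕ, energyOn μ p u (pairsMeeting (ball x ((1 / 4) ^ (k + j))))
      ≤ A * ((4⁻¹ ^ (α : ℝ)) ^ j) ^ p) :
    ∃ L : ℝ≥0, HolderOnWith L α (preciseRep μ u) K := by
  set τ : ℝ≥0∞ := 4⁻¹ ^ (α : ℝ)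
  have hτ : τ < 1 := ENNReal.rpow_lt_one (by simp) (by exact_mod_cast hα)
  set D : ℝ≥0∞ := ((μ (closedBall 0 (1 / 16)))⁻¹ ^ 2 * A) ^ p⁻¹
  have hD : D ≠ ⊤ := by
    have h_ball : μ (closedBall 0 (1 / 16)) ≠ 0 :=
      (measure_closedBall_pos μ 0 (by norm_num)).ne'
    have hp₀ : 0 ≤ p⁻¹ := by positivity
    finiteness
  have h_radius (j : ℕ) : (1 / 4 : ℝ) ^ (k + j) * (1 / 4) = (1 / 4) ^ (k + 1 + j) := by ring
  have h_step (x) (hx : x ∈ K) (y : E) (i j : ℕ)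
      (hi : (1 / 4 : ℝ) ^ (k + j) * (1 / 16) ≤ (1 / 4) ^ i)
      (hi' : (1 / 4 : ℝ) ^ i ≤ (1 / 4) ^ (k + j) * (1 / 4))
      (hxy : dist x y ≤ (1 / 4) ^ (k + 1 + j)) :
      edist (ballAverage μ u x ((1 / 4) ^ (k + 1 + j))) (ballAverage μ u y ((1 / 4) ^ i))
        ≤ D * τ ^ j := by
    rw [← h_radius] at hxy ⊢
    exact edist_ballAverage_ballAverage_le μ hp hu hB (by positivity) hi hi' hxy (h x hx j)
  have h_succ (x) (hx : x ∈ K) (j : ℕ) : edist (ballAverage μ u x ((1 / 4) ^ (k + 1 + j)))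
      (ballAverage μ u x ((1 / 4) ^ (k + 1 + (j + 1)))) ≤ D * τ ^ j := by
    refine h_step x hx x _ j (le_of_eq (by ring)) ?_ (by simp)
    rw [h_radius]
    exact pow_le_pow_of_le_one (by norm_num) (by norm_num) (by omega)
  have h_tendsto (x) (hx : x ∈ K) := tendsto_preciseRep_of_edist_le_geometric μ hD hτ (h_succ x hx)
  have h_bdd (x) (hx : x ∈ K) : ‖preciseRep μ u x‖ₑ ≤ ENNReal.ofReal B := by
    rw [← ofReal_norm]
    exact ENNReal.ofReal_le_ofReal <| le_of_tendsto' (h_tendsto x hx).norm fun j ↦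
      norm_ballAverage_le μ hB x (by positivity)
  refine exists_holderOnWith_of_tendsto_of_edist_le_geometric hα hD
    (B := ENNReal.ofReal B + ENNReal.ofReal B) (by finiteness) (k + 1) h_tendsto h_succ
    (fun x hx y _ j hxy ↦ h_step x hx y _ j ?_ (h_radius j).ge hxy) fun x hx y hy ↦ ?_
  · rw [← h_radius]
    gcongr
    norm_num
  · rw [edist_eq_enorm_sub]
    exact enorm_sub_le.trans (add_le_add (h_bdd x hx) (h_bdd y hy))

end Campanato

section Euclidean

lemma ofReal_norm_rpow_div_eq_energyDensity {E F : Type*} [NormedAddCommGroup E]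
    [NormedSpace ℝ E] [NormedAddCommGroup F] {p : ℝ} (hp : 0 < p) (u : E → F) (x y : E) :
    ENNReal.ofReal (‖u x - u y‖ ^ p / ‖x - y‖ ^ (2 * (finrank ℝ E : ℝ)))
      = energyDensity p u x y := by
  have h_exp : 2 * (finrank ℝ E : ℝ) = (2 * finrank ℝ E : ℕ) := by push_cast; rfl
  rcases eq_or_ne x y with rfl | hxy
  · simp [energyDensity, Real.zero_rpow hp.ne', ENNReal.zero_rpow_of_pos hp]
  have h_pos : 0 < ‖x - y‖ := norm_pos_iff.2 (sub_ne_zero.2 hxy)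
  rw [energyDensity, critKernel, h_exp, Real.rpow_natCast,
    ENNReal.ofReal_div_of_pos (pow_pos h_pos _), ENNReal.ofReal_pow (norm_nonneg _),
    ← ENNReal.ofReal_rpow_of_nonneg (norm_nonneg _) hp.le, ofReal_norm, ofReal_norm, div_eq_mul_inv]

variable {n M : ℕ} {s : ℝ} {u : Euc n → Euc M}

lemma energy_eq_energyOn (hn : 1 ≤ n) (hs : 0 < s) (hu : Measurable u) :
    energy n M s u = energyOn volume (n / s) u univ := by
  rw [energyOn, Measure.restrict_univ,
    lintegral_prod _ (measurable_energyDensity _ hu).aemeasurable, energy]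
  refine lintegral_congr fun x ↦ lintegral_congr fun y ↦ ?_
  rw [← ofReal_norm_rpow_div_eq_energyDensity (by positivity), finrank_euclideanSpace_fin]

lemma gagliardo_univ_eq_energy_rpow (hs : s ≠ 0) :
    gagliardo n M s (n / s) univ u = energy n M s u ^ (1 / (n / s)) := by
  have h_exp : (n : ℝ) + s * (n / s) = 2 * n := by rw [mul_div_cancel₀ _ hs]; ring
  simp only [gagliardo, energy, h_exp, Measure.restrict_univ]

lemma isMinimizingHarmonic_of_energy_le (hn : 1 ≤ n) (hs : 0 < s) (hu : Measurable u)
    (hu₁ : ∀ x, ‖u x‖ = 1) (hu_fin : gagliardo n M s (n / s) univ u < ⊤) {Ω : Set (Euc n)}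
    (hΩ : MeasurableSet Ω)
    (h_min : ∀ v : Euc n → Euc M, Measurable v → (∀ x, ‖v x‖ = 1) →
      (∀ᵐ x ∂volume.restrict Ωᶜ, v x = u x) → energy n M s u ≤ energy n M s v) :
    IsMinimizingHarmonic volume (n / s) u Ω where
  measurable := hu
  norm_eq_one := hu₁
  energy_ne_top := by
    have hp : 0 < 1 / (n / s) := by positivity
    rw [gagliardo_univ_eq_energy_rpow hs.ne', ENNReal.rpow_lt_top_iff_of_pos hp,
      energy_eq_energyOn hn hs hu] at hu_fin
    exact hu_fin.ne
  energy_le v hv hv₁ hvu := by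
    rw [← energy_eq_energyOn hn hs hu, ← energy_eq_energyOn hn hs hv]
    exact h_min v hv hv₁ ((ae_restrict_mem hΩ.compl).mono hvu)

end Euclidean

section Regularity

lemma exists_pos_lt_one_le_rpow_rpow {θ : ℝ≥0∞} (hθ : θ < 1) (p : ℝ) :
    ∃ α : ℝ≥0, 0 < α ∧ α < 1 ∧ θ ≤ ((4⁻¹ : ℝ≥0∞) ^ (α : ℝ)) ^ p := by
  have h_tendsto : Tendsto (fun a : ℝ ↦ ENNReal.ofReal (4⁻¹ ^ (a * p))) (𝓝[>] 0) (𝓝 1) := by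
    have h_cont : Continuous fun a : ℝ ↦ ENNReal.ofReal (4⁻¹ ^ (a * p)) :=
      ENNReal.continuous_ofReal.comp
        ((Real.continuous_const_rpow (by norm_num)).comp (continuous_mul_const p))
    simpa using (h_cont.tendsto 0).mono_left nhdsWithin_le_nhds
  obtain ⟨a, ha, ha₀, ha₁⟩ := ((h_tendsto.eventually_const_lt hθ).and
    (Ioo_mem_nhdsGT one_pos)).exists
  lift a to ℝ≥0 using ha₀.le
  refine ⟨a, by exact_mod_cast ha₀, by exact_mod_cast ha₁, ha.le.trans_eq ?_⟩
  rw [← ENNReal.rpow_mul, ← ENNReal.ofReal_rpow_of_pos (by norm_num),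
    ENNReal.ofReal_inv_of_pos (by norm_num), ENNReal.ofReal_ofNat]

variable {E F : Type*} [NormedAddCommGroup E] [NormedSpace ℝ E] [FiniteDimensional ℝ E]
  [Nontrivial E] [MeasurableSpace E] [BorelSpace E] [NormedAddCommGroup F] [MeasurableSpace F]
  [BorelSpace F] [SecondCountableTopology F] (μ : Measure E) [μ.IsAddHaarMeasure]

lemma exists_pow_forall_ball_subset_and_energyOn_le {p : ℝ} {u : E → F} (hu : Measurable u)
    (hu_energy : energyOn μ p u univ ≠ ⊤) {ε : ℝ≥0∞} (hε : ε ≠ 0) {K Ω : Set E}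
    (hK : IsCompact K) (hΩ : IsOpen Ω) (hKΩ : K ⊆ Ω) :
    ∃ k : ℕ, ∀ x ∈ K, ball x ((1 / 4) ^ k) ⊆ Ω ∧
      energyOn μ p u (pairsMeeting (ball x ((1 / 4) ^ k))) ≤ ε := by
  obtain ⟨ρ, hρ, h_thick⟩ := hK.exists_thickening_subset_open hΩ hKΩ
  obtain ⟨δ, hδ, h_small⟩ := exists_energyOn_pairsMeeting_le_of_measure_lt μ hu hu_energy hε
  obtain ⟨k, hk_meas, -, hk⟩ := ((tendsto_pow_atTop_nhdsWithin_zero_of_lt_one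
    (by norm_num : (0 : ℝ) < 1 / 4) (by norm_num)).eventually
    ((eventually_measure_ball_lt μ hδ).and (Ioo_mem_nhdsGT hρ))).exists
  exact ⟨k, fun x hx ↦ ⟨(ball_subset_ball hk.le).trans
    ((ball_subset_thickening hx ρ).trans h_thick), h_small _ (hk_meas x)⟩⟩

variable [NormedSpace ℝ F] [CompleteSpace F]

lemma exists_forall_isMinimizingHarmonic_holderOnWith_preciseRep {p : ℝ}
    (hp : finrank ℝ E < p) :
    ∃ α : ℝ≥0, 0 < α ∧ α < 1 ∧ ∀ (u : E → F) (Ω : Set E), IsOpen Ω →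
      IsMinimizingHarmonic μ p u Ω → ∀ K ⊆ Ω, IsCompact K →
        ∃ L : ℝ≥0, HolderOnWith L α (preciseRep μ u) K := by
  obtain ⟨ε, hε, θ, hθ, h_decay⟩ := exists_energyOn_pairsMeeting_ball_le_pow_mul (F := F) μ hp
  obtain ⟨α, hα, hα₁, hθα⟩ := exists_pos_lt_one_le_rpow_rpow hθ p
  refine ⟨α, hα, hα₁, fun u Ω hΩ hu K hKΩ hK ↦ ?_⟩
  have hp₁ : 1 ≤ p :=
    le_trans (by exact_mod_cast Nat.one_le_iff_ne_zero.2 Module.finrank_pos.ne') hp.le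
  obtain ⟨k, hk⟩ := exists_pow_forall_ball_subset_and_energyOn_le μ hu.measurable
    hu.energy_ne_top hε hK hΩ hKΩ
  refine exists_holderOnWith_preciseRep μ hp₁ hu.measurable (fun x ↦ (hu.norm_eq_one x).le) hα
    hu.energy_ne_top (k := k) fun x hx j ↦ ?_
  calc energyOn μ p u (pairsMeeting (ball x ((1 / 4) ^ (k + j))))
      ≤ θ ^ j * energyOn μ p u (pairsMeeting (ball x ((1 / 4) ^ k))) := by
        rw [pow_add]
        exact h_decay u x _ (by positivity) (hu.mono (hk x hx).1) (hk x hx).2 j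
    _ ≤ ((4⁻¹ ^ (α : ℝ)) ^ p) ^ j * energyOn μ p u univ := by
        gcongr
        exact energyOn_mono μ p u (subset_univ _)
    _ = energyOn μ p u univ * ((4⁻¹ ^ (α : ℝ)) ^ j) ^ p := by
        rw [mul_comm, ← ENNReal.rpow_natCast_mul, ← ENNReal.rpow_mul_natCast, mul_comm p]

lemma exists_forall_isMinimizingHarmonic_exists_ae_eq_holderOnWith {p : ℝ}
    (hp : finrank ℝ E < p) :
    ∃ α : ℝ≥0, 0 < α ∧ α < 1 ∧ ∀ (u : E → F) (Ω : Set E), IsOpen Ω →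
      IsMinimizingHarmonic μ p u Ω → ∃ ut : E → F, (∀ x, ‖ut x‖ = 1) ∧ ut =ᵐ[μ] u ∧
        ∀ K ⊆ Ω, IsCompact K → ∃ L : ℝ≥0, HolderOnWith L α ut K := by
  classical
  obtain ⟨α, hα, hα₁, h_holder⟩ :=
    exists_forall_isMinimizingHarmonic_holderOnWith_preciseRep (F := F) μ hp
  refine ⟨α, hα, hα₁, fun u Ω hΩ hu ↦ ?_⟩
  have h_ae : preciseRep μ u =ᵐ[μ] u := preciseRep_ae_eq μ
    ((locallyIntegrable_const (1 : ℝ)).mono hu.measurable.aestronglyMeasurable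
      (ae_of_all _ fun x ↦ by simp [hu.norm_eq_one x]))
  have h_cont : ContinuousOn (preciseRep μ u) Ω := fun x hx ↦ by
    obtain ⟨K, hK_nhds, hKΩ, hK⟩ := local_compact_nhds (hΩ.mem_nhds hx)
    obtain ⟨L, hL⟩ := h_holder u Ω hΩ hu K hKΩ hK
    exact ((hL.continuousOn hα).continuousAt hK_nhds).continuousWithinAt
  have h_norm : EqOn (fun x ↦ ‖preciseRep μ u x‖) (fun _ ↦ 1) Ω :=
    Measure.eqOn_open_of_ae_eq (ae_restrict_of_ae (h_ae.mono fun x hx ↦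
      (congrArg norm hx).trans (hu.norm_eq_one x))) hΩ h_cont.norm continuousOn_const
  refine ⟨Ω.piecewise (preciseRep μ u) u, fun x ↦ ?_, ?_, fun K hKΩ hK ↦ ?_⟩
  · by_cases hx : x ∈ Ω
    · rw [piecewise_eq_of_mem _ _ _ hx]
      exact h_norm hx
    · rw [piecewise_eq_of_notMem _ _ _ hx, hu.norm_eq_one]
  · filter_upwards [h_ae] with x hx
    by_cases hxΩ : x ∈ Ω <;> simp [hxΩ, hx]
  · obtain ⟨L, hL⟩ := h_holder u Ω hΩ hu K hKΩ hK
    refine ⟨L, fun x hx y hy ↦ ?_⟩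
    rw [piecewise_eq_of_mem _ _ _ (hKΩ hx), piecewise_eq_of_mem _ _ _ (hKΩ hy)]
    exact hL x hx y hy

theorem stmt18_general {Ω : Set E} (hΩ : IsOpen Ω) {p : ℝ} (hp : finrank ℝ E < p) {u : E → F}
    (hu : IsMinimizingHarmonic μ p u Ω) :
    ∃ α : ℝ, 0 < α ∧ α < 1 ∧
      ∃ ut : E → F, (∀ x, ‖ut x‖ = 1) ∧ (∀ᵐ x ∂μ, ut x = u x) ∧
        ∀ K : Set E, IsCompact K → K ⊆ Ω →
          ∃ L : ℝ, ∀ x ∈ K, ∀ y ∈ K, ‖ut x - ut y‖ ≤ L * ‖x - y‖ ^ α := by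
  obtain ⟨α, hα, hα₁, h_reg⟩ :=
    exists_forall_isMinimizingHarmonic_exists_ae_eq_holderOnWith (F := F) μ hp
  obtain ⟨ut, hut, hut_ae, h_holder⟩ := h_reg u Ω hΩ hu
  refine ⟨α, by exact_mod_cast hα, by exact_mod_cast hα₁, ut, hut, hut_ae, fun K hK hKΩ ↦ ?_⟩
  obtain ⟨L, hL⟩ := h_holder K hKΩ hK
  refine ⟨L, fun x hx y hy ↦ ?_⟩
  simpa only [dist_eq_norm] using hL.dist_le hx hy

end Regularity

/-- local Hölder continuity of sphere-valued minimizing `W^{s,n/s}`-harmonic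
maps. -/
theorem stmt18 (n M : ℕ) (hn : 1 ≤ n) (hM : 2 ≤ M) (s : ℝ) (hs : 0 < s) (hs1 : s < 1)
    (hn1 : n = 1 → s ≤ 1 / 2)
    (u : Euc n → Euc M) (hu : Measurable u) (huS : ∀ x, ‖u x‖ = 1)
    (huW : gagliardo n M s ((n : ℝ) / s) Set.univ u < ⊤)
    (Ω : Set (Euc n)) (hΩ : IsOpen Ω)
    (hmin : ∀ v : Euc n → Euc M, Measurable v → (∀ x, ‖v x‖ = 1) →
      (∀ᵐ x ∂(volume.restrict Ωᶜ), v x = u x) →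
      energy n M s u ≤ energy n M s v) :
    ∃ α : ℝ, 0 < α ∧ α < 1 ∧
      ∃ ut : Euc n → Euc M, (∀ x, ‖ut x‖ = 1) ∧ (∀ᵐ x, ut x = u x) ∧
        ∀ K : Set (Euc n), IsCompact K → K ⊆ Ω →
          ∃ L : ℝ, ∀ x ∈ K, ∀ y ∈ K, ‖ut x - ut y‖ ≤ L * ‖x - y‖ ^ α := by
  have : Nontrivial (Euc n) :=
    Module.nontrivial_of_finrank_pos (R := ℝ) (by rwa [finrank_euclideanSpace_fin])
  refine stmt18_general volume hΩ ?_
    (isMinimizingHarmonic_of_energy_le hn hs hu huS huW hΩ.measurableSet hmin)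
  rw [finrank_euclideanSpace_fin, lt_div_iff₀ hs]
  exact mul_lt_of_lt_one_right (by positivity) hs1
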